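/- Local upper bound: for every μ ∈ 𝒫, lim_{ε→0} limsup_{n→∞} (1/n²) log P( d(L_n, μ) ≤ ε ) ≤ −(1/2) ∬ f(z,w) dμ(z)dμ(w), where d is the Lévy–Prokhorov metric on M_1(ℂ). -/

import Mathlib

open MeasureTheory ProbabilityTheory Filter Polynomial
open scoped ENNReal NNReal Classical

noncomputable section

/-- Polynomials of positive degree with all coefficients real and strictly positive. -/
def polPos (p : Polynomial ℂ) : Prop :=
  0 < p.natDegree ∧ ∀ i ≤ p.natDegree, (p.coeff i).im = 0 ∧ 0 < (p.coeff i).re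

/-- Empirical measure of the zeros of a polynomial (counted with multiplicity). -/
def zeroMeasure (p : Polynomial ℂ) : Measure ℂ :=
  (p.natDegree : ℝ≥0∞)⁻¹ • (p.roots.map MeasureTheory.Measure.dirac).sum

/-- The closure of the set of empirical zero measures of polynomials with positive
coefficients, inside the space of probability measures with the weak topology. -/
def calP : Set (ProbabilityMeasure ℂ) :=
  closure {μ : ProbabilityMeasure ℂ |
    ∃ p : Polynomial ℂ, polPos p ∧ (μ : Measure ℂ) = zeroMeasure p}

/-- The kernel f(z,w) = log|1-z| + log|1-w| - log|z-w|. -/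
def fker (z w : ℂ) : ℝ :=
  Real.log ‖1 - z‖ + Real.log ‖1 - w‖
    - Real.log ‖z - w‖

/-- The double integral ∬ f dμ dμ, as an extended real number: the (Lebesgue)
integral of the positive part minus that of the negative part. -/
def doubleInt (μ : Measure ℂ) : EReal :=
  ((∫⁻ q : ℂ × ℂ, ENNReal.ofReal (fker q.1 q.2) ∂(μ.prod μ) : ℝ≥0∞) : EReal)
    - ((∫⁻ q : ℂ × ℂ, ENNReal.ofReal (-(fker q.1 q.2)) ∂(μ.prod μ) : ℝ≥0∞) : EReal)

/-- The large deviations rate function. -/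
def rateI (μ : ProbabilityMeasure ℂ) : EReal :=
  if μ ∈ calP then (2 : EReal)⁻¹ * doubleInt (μ : Measure ℂ) else ⊤

end

noncomputable section

/-- The random polynomial `P_n(z) = ∑_{j=0}^n ξ_j z^j` built from real coefficients. -/
def randPoly {Ω : Type*} (ξ : ℕ → Ω → ℝ) (n : ℕ) (ω : Ω) : Polynomial ℂ :=
  ∑ j ∈ Finset.range (n + 1), Polynomial.C ((ξ j ω : ℝ) : ℂ) * Polynomial.X ^ j

end

/-!
Let `p` have degree `n`, positive coefficients and roots `z₁, …, zₙ`, and pass to the coordinates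
`v₀ = p(1)`, `vⱼ = 1 / (zⱼ - 1)`. The coefficients of `p` depend polynomially on `v`, with Jacobian
determinant `v₀ⁿ` times a Vandermonde product, so the probability that the zeros of the random
polynomial are close to `μ` is at most a Lebesgue integral of `|v₀|ⁿ ∏_{i<j} |vᵢ - vⱼ|`.
Since `|vᵢ - vⱼ| = exp (-f(zᵢ, zⱼ))`, that product is `exp (-(n²/2) ∬ f)` for the empirical
measure, and the remaining factors are negligible on the scale `n²`: there are only `n ^ O(n)`
patterns of real and conjugate roots, positivity of the coefficients forces `|vⱼ| = O(n)` for
`j ≥ 1`, and all coefficients are below `n³` outside an event of negligible probability.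

The diagonal is handled by an energy that is truncated at level `m` and regularized at scale `δ`; it
is continuous in the Lévy–Prokhorov metric. Letting `δ → 0` and then `m → ∞` gives the theorem,
because a limit of zero measures of polynomials with positive coefficients has no mass at `1`, where
the coordinates are singular.
-/

noncomputable section Determinant

open Matrix

variable {n : ℕ}

/-- The affine factors of a polynomial of degree at most `n` with `p(1) ≠ 0`, in the coordinates
`w 0 = p(1)` and `w (j + 1) = 1 / (z_j - 1)` for the zeros `z_j`: the constant `w 0` for the index
`0`, and the linear polynomial with value `1` at `1` and zero `1 + 1 / a` for the others. The value
`a = 0` encodes a zero at infinity. -/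
def coordFactor (j : Fin (n + 1)) (a : ℂ) : ℂ[X] :=
  Fin.cases (C a) (fun _ => 1 + C a * (1 - X)) j

/-- The derivative of `coordFactor j a` with respect to the coordinate `a`. -/
def coordSlope (j : Fin (n + 1)) : ℂ[X] :=
  Fin.cases 1 (fun _ => 1 - X) j

/-- The polynomial with coordinates `w`. -/
def coordPoly (w : Fin (n + 1) → ℂ) : ℂ[X] :=
  ∏ j, coordFactor j (w j)

/-- The partial derivative of `coordPoly` with respect to the coordinate `m`. -/
def coordPartial (w : Fin (n + 1) → ℂ) (m : Fin (n + 1)) : ℂ[X] :=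
  ∏ j, Function.update (fun i => coordFactor i (w i)) m (coordSlope m) j

/-- The complex Jacobian matrix of the map from coordinates to coefficients. -/
def coordJacobian (w : Fin (n + 1) → ℂ) : Matrix (Fin (n + 1)) (Fin (n + 1)) ℂ :=
  Matrix.of fun i m => (coordPartial w m).coeff i

lemma coordFactor_add (j : Fin (n + 1)) (a b : ℂ) :
    coordFactor j (a + b) = coordFactor j a + C b * coordSlope j := by
  refine Fin.cases ?_ (fun _ => ?_) j <;> simp only [coordFactor, coordSlope, Fin.cases_zero,
    Fin.cases_succ, map_add] <;> ring

lemma coordPoly_eq (w : Fin (n + 1) → ℂ) :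
    coordPoly w = C (w 0) * ∏ j : Fin n, (1 + C (w j.succ) * (1 - X)) := by
  simp [coordPoly, coordFactor, Fin.prod_univ_succ]

lemma coordPoly_add_single (w : Fin (n + 1) → ℂ) (m : Fin (n + 1)) (t : ℂ) :
    coordPoly (w + t • Pi.single m 1) = coordPoly w + C t * coordPartial w m := by
  have hfac : (fun j => coordFactor j ((w + t • Pi.single m (1 : ℂ) : Fin (n + 1) → ℂ) j)) =
      Function.update (fun j => coordFactor j (w j)) m
        (coordFactor m (w m) + C t * coordSlope m) := by
    funext j
    rcases eq_or_ne j m with rfl | hj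
    · simp [coordFactor_add]
    · simp [hj]
  have hself : coordPoly w = coordFactor m (w m) *
      ∏ j ∈ Finset.univ \ {m}, coordFactor j (w j) := by
    rw [coordPoly, Finset.prod_eq_mul_prod_sdiff_singleton_of_mem (Finset.mem_univ m)]
  rw [hself, coordPoly, coordPartial, Finset.prod_update_of_mem (Finset.mem_univ m), hfac,
    Finset.prod_update_of_mem (Finset.mem_univ m)]
  ring

lemma projVandermonde_mulVec_coeff (v w : Fin (n + 1) → ℂ) (p : ℂ[X]) (k : Fin (n + 1)) :
    (projVandermonde v w *ᵥ fun i => p.coeff i) k =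
      MvPolynomial.eval ![v k, w k] (p.homogenize n) := by
  simp only [homogenize, map_sum, MvPolynomial.eval_monomial, mulVec, dotProduct,
    projVandermonde_apply]
  rw [Finset.Nat.sum_antidiagonal_eq_sum_range_succ_mk, Finset.sum_range]
  refine Finset.sum_congr rfl fun i _ => ?_
  simp [Finsupp.prod_fintype, Fin.prod_univ_two, Fin.val_rev, mul_comm]

/-- The projective evaluation at `(a : b)` of a factor of `coordPartial`. -/
def projFactor (w : Fin (n + 1) → ℂ) (m : Fin (n + 1)) (a b : ℂ) (j : Fin (n + 1)) : ℂ :=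
  Function.update (Fin.cons (w 0) fun i => b + w i.succ * (b - a) : Fin (n + 1) → ℂ) m
    ((Fin.cons 1 fun _ => b - a : Fin (n + 1) → ℂ) m) j

lemma eval_homogenize_coordPartial (w : Fin (n + 1) → ℂ) (m : Fin (n + 1)) (a b : ℂ) :
    MvPolynomial.eval ![a, b] ((coordPartial w m).homogenize n) = ∏ j, projFactor w m a b j := by
  let d : Fin (n + 1) → ℕ := Fin.cons 0 fun _ => 1
  have hd : ∑ j, d j = n := by simp [d, Fin.sum_univ_succ]
  have hdeg (j) : (Function.update (fun i => coordFactor i (w i)) m (coordSlope m) j).natDegree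
      ≤ d j := by
    have hfactor : (coordFactor j (w j)).natDegree ≤ d j := by
      refine Fin.cases ?_ (fun j => ?_) j
      · simp [coordFactor]
      · simp only [coordFactor, Fin.cases_succ, d, Fin.cons_succ]
        compute_degree
    have hslope : (coordSlope m : ℂ[X]).natDegree ≤ d m := by
      refine Fin.cases ?_ (fun m => ?_) m
      · simp [coordSlope]
      · simp only [coordSlope, Fin.cases_succ, d, Fin.cons_succ]
        compute_degree
    rcases eq_or_ne j m with rfl | hj <;> simp [*]
  have hprod := homogenize_finsetProd fun j (_ : j ∈ Finset.univ) => hdeg j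
  rw [hd] at hprod
  rw [coordPartial, hprod, map_prod]
  refine Finset.prod_congr rfl fun j _ => ?_
  rw [projFactor]
  rcases eq_or_ne j m with rfl | hj
  · simp only [Function.update_self]
    refine Fin.cases ?_ (fun j => ?_) j <;> simp [coordSlope, d]
  · simp only [Function.update_of_ne hj]
    refine Fin.cases ?_ (fun j => ?_) j <;> simp [coordFactor, d]

lemma projVandermonde_mul_coordJacobian (w : Fin (n + 1) → ℂ) :
    projVandermonde (Fin.cons 1 fun k => 1 + w k.succ) (Fin.cons 1 fun k => w k.succ) *
        coordJacobian w =
      diagonal (Fin.cons 1 fun k : Fin n =>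
        -w 0 * ∏ i ∈ ({k}ᶜ : Finset (Fin n)), (w k.succ - w i.succ)) := by
  ext k m
  have hentry (v v' : Fin (n + 1) → ℂ) : (projVandermonde v v' * coordJacobian w) k m =
      ∏ j, projFactor w m (v k) (v' k) j := by
    rw [← eval_homogenize_coordPartial, ← projVandermonde_mulVec_coeff]
    rfl
  rw [hentry]
  refine Fin.cases ?_ (fun k => ?_) k
  · refine Fin.cases ?_ (fun m => ?_) m
    · simp [projFactor, Fin.prod_univ_succ]
    · rw [diagonal_apply_ne _ (Fin.succ_ne_zero m).symm]
      exact Finset.prod_eq_zero (Finset.mem_univ m.succ) (by simp [projFactor])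
  · rcases eq_or_ne m k.succ with rfl | hm
    · rw [diagonal_apply_eq, Fin.prod_univ_succ,
        Fintype.prod_eq_mul_prod_compl k]
      have hcompl (i) (hi : i ∈ ({k}ᶜ : Finset (Fin n))) :
          projFactor w k.succ (1 + w k.succ) (w k.succ) i.succ = w k.succ - w i.succ := by
        have hik : i ≠ k := by simpa using hi
        simp [projFactor, hik, sub_eq_add_neg]
      simp only [Fin.cons_succ, Finset.prod_congr rfl hcompl]
      simp [projFactor, (Fin.succ_ne_zero k).symm]
    · rw [diagonal_apply_ne _ hm.symm]
      exact Finset.prod_eq_zero (Finset.mem_univ k.succ) (by simp [projFactor, hm.symm])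

lemma coordPartial_eq_of_eq (w : Fin (n + 1) → ℂ) {a b : Fin n} (h : w a.succ = w b.succ) :
    coordPartial w a.succ = coordPartial w b.succ := by
  rw [coordPartial, coordPartial, ← Equiv.prod_comp (Equiv.swap a.succ b.succ)]
  refine Finset.prod_congr rfl fun j _ => ?_
  rcases eq_or_ne j a.succ with rfl | hja
  · simp [coordSlope, coordFactor, Function.update_apply, h, eq_comm]
  rcases eq_or_ne j b.succ with rfl | hjb
  · simp [coordSlope, coordFactor, Function.update_apply]
  · simp [Equiv.swap_apply_of_ne_of_ne, *]

lemma norm_det_vandermonde_sq (y : Fin n → ℂ) :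
    ‖(vandermonde y).det‖ ^ 2 = ∏ i, ∏ j ∈ ({i}ᶜ : Finset (Fin n)), ‖y i - y j‖ := by
  rw [← Finset.prod_prod_Ioi_mul_eq_prod_prod_off_diag fun i j => ‖y j - y i‖, det_vandermonde, sq]
  simp [Finset.prod_mul_distrib, norm_sub_rev]

lemma norm_det_coordJacobian (w : Fin (n + 1) → ℂ) :
    ‖(coordJacobian w).det‖ = ‖w 0‖ ^ n * ‖(vandermonde (Fin.tail w)).det‖ := by
  by_cases hinj : Function.Injective (Fin.tail w)
  · have hV : ‖(vandermonde (Fin.tail w)).det‖ ≠ 0 :=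
      norm_ne_zero_iff.2 (det_vandermonde_ne_zero_iff.2 hinj)
    have hdet := congrArg (‖·.det‖) (projVandermonde_mul_coordJacobian w)
    have hnode : ‖(projVandermonde (Fin.cons 1 fun k => 1 + w k.succ)
        (Fin.cons 1 fun k => w k.succ)).det‖ = ‖(vandermonde (Fin.tail w)).det‖ := by
      rw [det_projVandermonde, det_vandermonde, Fin.prod_univ_succ, Fin.prod_Ioi_zero]
      have hpair (i j : Fin n) : ‖(1 + w j.succ) * w i.succ - (1 + w i.succ) * w j.succ‖ =
          ‖w j.succ - w i.succ‖ := by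
        rw [← norm_neg]
        ring_nf
      simp [Fin.prod_Ioi_succ, hpair, Fin.tail]
    have hdiag : ‖(diagonal (Fin.cons 1 fun k : Fin n =>
        -w 0 * ∏ i ∈ ({k}ᶜ : Finset (Fin n)), (w k.succ - w i.succ))).det‖ =
        ‖w 0‖ ^ n * ‖(vandermonde (Fin.tail w)).det‖ ^ 2 := by
      rw [det_diagonal, norm_det_vandermonde_sq]
      simp [Fin.prod_univ_succ, Finset.prod_mul_distrib, Fin.tail]
    refine mul_left_cancel₀ hV ?_
    rw [det_mul, norm_mul, hnode, hdiag] at hdet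
    rw [hdet]
    ring
  · obtain ⟨a, b, h, hab⟩ := Function.not_injective_iff.1 hinj
    rw [det_vandermonde_eq_zero_iff.2 ⟨a, b, h, hab⟩, det_zero_of_column_eq
      (Fin.succ_injective n |>.ne hab) fun k => ?_, norm_zero, mul_zero]
    simp only [coordJacobian, of_apply, coordPartial_eq_of_eq w h]

end Determinant

noncomputable section RealCoordinates

open Matrix

lemma differentiable_coeff_prod {ι E : Type*} [NormedAddCommGroup E] [NormedSpace ℂ E]
    (s : Finset ι) {f : ι → E → ℂ[X]} (hf : ∀ i ∈ s, ∀ k, Differentiable ℂ fun x => (f i x).coeff k)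
    (k : ℕ) : Differentiable ℂ fun x => (∏ i ∈ s, f i x).coeff k := by
  induction s using Finset.cons_induction generalizing k with
  | empty => simp
  | cons a s ha ih =>
    simp only [Finset.prod_cons, coeff_mul]
    exact Differentiable.fun_sum fun x _ => (hf a (by simp) x.1).mul
      (ih (fun i hi => hf i (by simp [hi])) x.2)

variable {n : ℕ}

lemma differentiable_coeff_coordPoly (k : ℕ) :
    Differentiable ℂ fun w : Fin (n + 1) → ℂ => (coordPoly w).coeff k := by
  refine differentiable_coeff_prod _ (fun j _ k => ?_) k
  refine Fin.cases ?_ (fun j => ?_) j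
  · simp only [coordFactor, Fin.cases_zero, coeff_C]
    split_ifs <;> fun_prop
  · simp only [coordFactor, Fin.cases_succ, coeff_add, coeff_C_mul]
    fun_prop

lemma hasFDerivAt_coeff_coordPoly (w : Fin (n + 1) → ℂ) :
    HasFDerivAt (fun w (i : Fin (n + 1)) => (coordPoly w).coeff i)
      (LinearMap.toContinuousLinearMap (coordJacobian w).mulVecLin) w := by
  have hdiff : Differentiable ℂ fun (w : Fin (n + 1) → ℂ) (i : Fin (n + 1)) =>
      (coordPoly w).coeff i :=
    differentiable_pi.2 fun i => differentiable_coeff_coordPoly i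
  convert (hdiff w).hasFDerivAt
  refine ContinuousLinearMap.coe_injective (LinearMap.pi_ext' fun m => LinearMap.ext_ring ?_)
  simp only [LinearMap.coe_comp, Function.comp_apply, LinearMap.single_apply,
    LinearMap.coe_toContinuousLinearMap, mulVecLin_apply, mulVec_single_one,
    ContinuousLinearMap.coe_coe]
  rw [← (hdiff w).lineDeriv_eq_fderiv]
  refine (HasLineDerivAt.lineDeriv ?_).symm
  have hline (t : ℂ) : (fun i : Fin (n + 1) => (coordPoly (w + t • Pi.single m 1)).coeff i) =
      (fun i : Fin (n + 1) => (coordPoly w).coeff i) + t • (coordJacobian w).col m := by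
    ext i
    simp [coordPoly_add_single, coordJacobian]
  simpa [HasLineDerivAt, hline] using
    ((hasDerivAt_id (0 : ℂ)).smul_const ((coordJacobian w).col m)).const_add
      fun i : Fin (n + 1) => (coordPoly w).coeff i

section ConjPairing

variable {ι : Type*} [Fintype ι] [LinearOrder ι]

/-- For an involution `σ` of the index set, the matrix of the linear map sending real parameters to
families `w` with `w (σ j) = conj (w j)`: a fixed point `j` of `σ` carries the real number `v j` and
a pair `j < σ j` the conjugate numbers `v j ± I v (σ j)`. -/
def conjPairMatrix (σ : ι → ι) : Matrix ι ι ℂ :=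
  of fun j => if σ j = j then Pi.single j 1
    else if j < σ j then Pi.single j 1 + Pi.single (σ j) Complex.I
    else Pi.single (σ j) 1 - Pi.single j Complex.I

/-- The family of complex numbers with real parameters `v` and conjugation pattern `σ`. -/
def conjPairVec (σ : ι → ι) : (ι → ℝ) →ₗ[ℝ] (ι → ℂ) :=
  (conjPairMatrix σ).mulVecLin.restrictScalars ℝ ∘ₗ Complex.ofRealCLM.toLinearMap.compLeft ι

lemma conjPairVec_single (σ : ι → ι) (j : ι) :
    conjPairVec σ (Pi.single j 1) = (conjPairMatrix σ).col j := by
  have hsingle : Complex.ofRealCLM.toLinearMap.compLeft ι (Pi.single j 1) = Pi.single j 1 := by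
    ext k
    rcases eq_or_ne k j with rfl | hk <;> simp [*]
  simp only [conjPairVec, LinearMap.comp_apply, hsingle, LinearMap.coe_restrictScalars,
    mulVecLin_apply, mulVec_single_one]

lemma conjPairVec_apply (σ : ι → ι) (v : ι → ℝ) (j : ι) :
    conjPairVec σ v j = if σ j = j then (v j : ℂ)
      else if j < σ j then v j + Complex.I * v (σ j) else v (σ j) - Complex.I * v j := by
  change (if σ j = j then Pi.single j 1
    else if j < σ j then Pi.single j 1 + Pi.single (σ j) Complex.I
    else Pi.single (σ j) 1 - Pi.single j Complex.I) ⬝ᵥ (fun j => (v j : ℂ)) = _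
  split_ifs <;> simp

lemma conj_conjPairVec {σ : ι → ι} (hσ : Function.Involutive σ) (v : ι → ℝ) (j : ι) :
    starRingEnd ℂ (conjPairVec σ v j) = conjPairVec σ v (σ j) := by
  simp only [conjPairVec_apply, hσ j]
  rcases lt_trichotomy j (σ j) with h | h | h
  · simp [h.ne, h.ne', h, h.not_gt, sub_eq_add_neg]
  · simp [← h]
  · simp [h.ne, h.ne', h, h.not_gt]

lemma norm_det_conjPairMatrix_le (σ : ι → ι) :
    ‖(conjPairMatrix σ).det‖ ≤ (Fintype.card ι).factorial := by
  have hentry (i j : ι) : ‖conjPairMatrix σ i j‖ ≤ 1 := by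
    rw [conjPairMatrix, of_apply]
    by_cases hi : σ i = i
    · rw [if_pos hi, Pi.single_apply]
      split_ifs <;> simp
    · rcases eq_or_ne j i with rfl | hji
      · split_ifs <;> simp [Ne.symm hi]
      · rcases eq_or_ne j (σ i) with rfl | hjσ <;> split_ifs <;> simp [*]
  simpa using! det_le (abv := NormedField.toAbsoluteValue ℂ) hentry

end ConjPairing

/-- The real parametrization of the coefficients of the polynomials whose coordinates have
conjugation pattern `σ`. -/
def realCoeff (σ : Fin (n + 1) → Fin (n + 1)) (v : Fin (n + 1) → ℝ) (i : Fin (n + 1)) : ℝ :=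
  ((coordPoly (conjPairVec σ v)).coeff i).re

/-- The Jacobian matrix of `realCoeff`. -/
def realJacobian (σ : Fin (n + 1) → Fin (n + 1)) (v : Fin (n + 1) → ℝ) :
    Matrix (Fin (n + 1)) (Fin (n + 1)) ℝ :=
  (coordJacobian (conjPairVec σ v) * conjPairMatrix σ).map Complex.re

variable {σ : Fin (n + 1) → Fin (n + 1)}

lemma ofReal_realCoeff (hσ : Function.Involutive σ) (h0 : σ 0 = 0) (v : Fin (n + 1) → ℝ)
    (i : Fin (n + 1)) : (realCoeff σ v i : ℂ) = (coordPoly (conjPairVec σ v)).coeff i := by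
  have hfactor (j) : (coordFactor j (conjPairVec σ v j)).map (starRingEnd ℂ) =
      coordFactor (σ j) (conjPairVec σ v (σ j)) := by
    rw [← conj_conjPairVec hσ]
    rcases eq_or_ne j 0 with rfl | hj
    · simp [coordFactor, h0]
    · have hσj : σ j ≠ 0 := fun h => hj (by rw [← hσ j, h, h0])
      obtain ⟨k, hk⟩ := Fin.exists_succ_eq.2 hj
      obtain ⟨l, hl⟩ := Fin.exists_succ_eq.2 hσj
      rw [← hl, ← hk]
      simp [coordFactor]
  have hmap : (coordPoly (conjPairVec σ v)).map (starRingEnd ℂ) = coordPoly (conjPairVec σ v) := by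
    rw [coordPoly, Polynomial.map_prod, Finset.prod_congr rfl fun j _ => hfactor j]
    exact Equiv.prod_comp hσ.toPerm fun j => coordFactor j (conjPairVec σ v j)
  have hcoeff := congrArg (fun p => p.coeff i) hmap
  rw [coeff_map] at hcoeff
  exact Complex.conj_eq_iff_re.1 hcoeff

lemma hasFDerivAt_coeff_conjPairVec (σ : Fin (n + 1) → Fin (n + 1)) (v : Fin (n + 1) → ℝ)
    (i : Fin (n + 1)) :
    HasFDerivAt (fun v => (coordPoly (conjPairVec σ v)).coeff i)
      (LinearMap.toContinuousLinearMap (LinearMap.proj i ∘ₗ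
        (coordJacobian (conjPairVec σ v)).mulVecLin.restrictScalars ℝ ∘ₗ conjPairVec σ)) v :=
  hasFDerivAt_pi'.1 (((hasFDerivAt_coeff_coordPoly (conjPairVec σ v)).restrictScalars ℝ).comp v
    (LinearMap.toContinuousLinearMap (conjPairVec σ)).hasFDerivAt) i

lemma hasFDerivAt_realCoeff (σ : Fin (n + 1) → Fin (n + 1)) (v : Fin (n + 1) → ℝ) :
    HasFDerivAt (realCoeff σ) (LinearMap.toContinuousLinearMap (realJacobian σ v).mulVecLin) v := by
  refine hasFDerivAt_pi'.2 fun i => ?_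
  refine (Complex.reCLM.hasFDerivAt.comp v (hasFDerivAt_coeff_conjPairVec σ v i)).congr_fderiv ?_
  refine ContinuousLinearMap.coe_injective (LinearMap.pi_ext' fun m => LinearMap.ext_ring ?_)
  simp [realJacobian, conjPairVec_single, mul_apply, mulVec, dotProduct, Pi.single_apply]

lemma ofReal_realJacobian (hσ : Function.Involutive σ) (h0 : σ 0 = 0) (v : Fin (n + 1) → ℝ) :
    (realJacobian σ v).map Complex.ofReal =
      coordJacobian (conjPairVec σ v) * conjPairMatrix σ := by
  ext i m
  have him := Complex.imCLM.hasFDerivAt.comp v (hasFDerivAt_coeff_conjPairVec σ v i)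
  have hzero : (Complex.imCLM ∘ fun v : Fin (n + 1) → ℝ => (coordPoly (conjPairVec σ v)).coeff i) =
      fun _ => 0 := by
    funext v
    simp [← ofReal_realCoeff hσ h0]
  rw [hzero] at him
  have happly := DFunLike.congr_fun (him.unique (hasFDerivAt_const 0 v)) (Pi.single m 1)
  refine Complex.ext rfl ?_
  simpa [conjPairVec_single, mul_apply, mulVec, dotProduct] using happly.symm

lemma abs_det_realJacobian_le (hσ : Function.Involutive σ) (h0 : σ 0 = 0) (v : Fin (n + 1) → ℝ) :
    |(realJacobian σ v).det| ≤
      |v 0| ^ n * ‖(vandermonde (Fin.tail (conjPairVec σ v))).det‖ * (n + 1).factorial := by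
  have hdet : ((realJacobian σ v).det : ℂ) =
      (coordJacobian (conjPairVec σ v)).det * (conjPairMatrix σ).det := by
    rw [← det_mul, ← ofReal_realJacobian hσ h0]
    exact Complex.ofRealHom.map_det _
  have hzero : conjPairVec σ v 0 = v 0 := by simp [conjPairVec_apply, h0]
  rw [← Real.norm_eq_abs, ← Complex.norm_real, hdet, norm_mul, norm_det_coordJacobian, hzero,
    Complex.norm_real, Real.norm_eq_abs]
  gcongr
  simpa using norm_det_conjPairMatrix_le σ

end RealCoordinates

noncomputable section RootCoordinates

open Matrix

section Enumeration

variable {ι α : Type*} [Fintype ι]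

lemma exists_perm_comp_eq {f g : ι → α} (h : Finset.univ.val.map f = Finset.univ.val.map g) :
    ∃ τ : Equiv.Perm ι, g ∘ τ = f := by
  have hcard (a : α) : Fintype.card {i // f i = a} = Fintype.card {i // g i = a} := by
    have := congrArg (Multiset.count a) h
    simp only [Multiset.count_map] at this
    rw [Fintype.card_subtype, Fintype.card_subtype]
    simpa [Finset.card, eq_comm] using this
  refine ⟨Equiv.ofFiberEquiv (f := f) (g := g) fun a => Fintype.equivOfCardEq (hcard a), ?_⟩
  ext i
  exact Equiv.ofFiberEquiv_map _ i

lemma exists_involutive_apply_eq_conj {w : ι → ℂ}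
    (h : Finset.univ.val.map (fun i => starRingEnd ℂ (w i)) = Finset.univ.val.map w) :
    ∃ σ : ι → ι, Function.Involutive σ ∧ (∀ i, w (σ i) = starRingEnd ℂ (w i)) ∧
      ∀ i, (w i).im = 0 → σ i = i := by
  obtain ⟨τ, hτ⟩ := exists_perm_comp_eq h
  replace hτ (i) : w (τ i) = starRingEnd ℂ (w i) := congrFun hτ i
  have hτ' (i) : w (τ.symm i) = starRingEnd ℂ (w i) := by
    rw [← Complex.conj_conj (w (τ.symm i)), ← hτ, τ.apply_symm_apply]
  -- `τ` need not be an involution, so its values are used on the upper half plane only.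
  refine ⟨fun i => if (w i).im = 0 then i else if 0 < (w i).im then τ i else τ.symm i,
    fun i => ?_, fun i => ?_, fun i hi => if_pos hi⟩
  · rcases lt_trichotomy (w i).im 0 with hi | hi | hi
    · simp [hi.ne, hi.not_gt, hτ', hi]
    · simp [hi]
    · simp [hi.ne', hi, hτ, hi.not_gt]
  · dsimp only
    split_ifs with h0 h1
    · exact (Complex.conj_eq_iff_im.2 h0).symm
    · exact hτ i
    · exact hτ' i

lemma exists_conjPairVec_eq [LinearOrder ι] {σ : ι → ι} (hσ : Function.Involutive σ) {w : ι → ℂ}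
    (hw : ∀ i, w (σ i) = starRingEnd ℂ (w i)) :
    ∃ v : ι → ℝ, conjPairVec σ v = w ∧ ∀ i, |v i| ≤ ‖w i‖ := by
  refine ⟨fun i => if i ≤ σ i then (w i).re else (w (σ i)).im, funext fun i => ?_, fun i => ?_⟩
  · rw [conjPairVec_apply]
    rcases lt_trichotomy i (σ i) with hi | hi | hi
    · simpa [hi.ne', hi, hi.le, hi.not_ge, hσ i, mul_comm] using Complex.re_add_im (w i)
    · rw [if_pos hi.symm, if_pos hi.le]
      exact Complex.conj_eq_iff_re.1 (by rw [← hw, ← hi])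
    · apply Complex.ext <;> simp [hi.ne, hi.le, hi.not_ge, hi.not_gt, hσ i, hw i]
  · dsimp only
    split_ifs
    · exact Complex.abs_re_le_norm _
    · rw [← Complex.norm_conj, ← hw]
      exact Complex.abs_im_le_norm _

end Enumeration

variable {n : ℕ}

lemma exists_map_univ_eq_roots {p : ℂ[X]} (hn : p.natDegree = n) :
    ∃ z : Fin n → ℂ, Finset.univ.val.map z = p.roots := by
  subst hn
  have hlen : p.roots.toList.length = p.natDegree := by
    rw [Multiset.length_toList, (IsAlgClosed.splits p).natDegree_eq_card_roots]
  rw [← hlen]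
  exact ⟨p.roots.toList.get, by rw [Fin.univ_val_map, List.ofFn_get, Multiset.coe_toList]⟩

/-- The coordinates of a polynomial `p` with `p(1) = s` and zeros `z`: the value at `1`, followed by
the images of the zeros under the Möbius map `z ↦ 1 / (z - 1)`. -/
def rootCoords (s : ℂ) (z : Fin n → ℂ) : Fin (n + 1) → ℂ :=
  Fin.cons s fun j => (z j - 1)⁻¹

lemma coordPoly_rootCoords {p : ℂ[X]} {z : Fin n → ℂ} (hp : p.eval 1 ≠ 0)
    (hz : Finset.univ.val.map z = p.roots) : coordPoly (rootCoords (p.eval 1) z) = p := by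
  have hp0 : p ≠ 0 := by
    rintro rfl
    simp at hp
  have hz1 (j) : z j - 1 ≠ 0 := by
    refine sub_ne_zero.2 fun h => hp ((mem_roots hp0).1 ?_)
    rw [← hz, ← h]
    exact Multiset.mem_map_of_mem z (Finset.mem_univ_val j)
  have hprod : p = C p.leadingCoeff * ∏ j, (X - C (z j)) := by
    conv_lhs => rw [(IsAlgClosed.splits p).eq_prod_roots, ← hz, Multiset.map_map]
    rfl
  have heval : p.eval 1 = p.leadingCoeff * ∏ j, (1 - z j) := by
    conv_lhs => rw [hprod]
    simp [eval_prod]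
  rw [coordPoly_eq]
  simp only [rootCoords, Fin.cons_zero, Fin.cons_succ]
  rw [heval, C_mul, map_prod, mul_assoc, ← Finset.prod_mul_distrib]
  conv_rhs => rw [hprod]
  congr 1
  refine Finset.prod_congr rfl fun j _ => ?_
  have hC : C (z j - 1) * C (z j - 1)⁻¹ = (1 : ℂ[X]) := by
    rw [← C_mul, mul_inv_cancel₀ (hz1 j), C_1]
  simp only [C_sub, C_1] at hC ⊢
  linear_combination (X - 1) * hC

lemma map_conj_rootCoords {p : ℂ[X]} (hp : p.map (starRingEnd ℂ) = p) {z : Fin n → ℂ}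
    (hz : Finset.univ.val.map z = p.roots) (s : ℝ) :
    Finset.univ.val.map (fun i => starRingEnd ℂ (rootCoords s z i)) =
      Finset.univ.val.map (rootCoords s z) := by
  have hroots : Finset.univ.val.map (fun j => starRingEnd ℂ (z j)) = Finset.univ.val.map z := by
    have := (IsAlgClosed.splits p).roots_map (starRingEnd ℂ)
    rw [hp, ← hz, Multiset.map_map] at this
    exact this.symm
  have hinv := congrArg (Multiset.map fun x : ℂ => (x - 1)⁻¹) hroots
  simp only [Multiset.map_map, Function.comp_def] at hinv
  rw [Fin.univ_succ, Finset.cons_val, Multiset.map_cons, Multiset.map_cons, Finset.map_val]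
  simp only [Multiset.map_map, Function.comp_def, Function.Embedding.coeFn_mk, rootCoords,
    Fin.cons_zero, Fin.cons_succ, Complex.conj_ofReal, map_inv₀, map_sub, map_one, hinv]

namespace polPos

variable {p : ℂ[X]}

lemma map_conj (hp : polPos p) : p.map (starRingEnd ℂ) = p := by
  ext i
  rw [coeff_map, Complex.conj_eq_iff_im]
  rcases le_or_gt i p.natDegree with hi | hi
  · exact (hp.2 i hi).1
  · simp [coeff_eq_zero_of_natDegree_lt hi]

lemma ofReal_re_coeff (hp : polPos p) (i : ℕ) : ((p.coeff i).re : ℂ) = p.coeff i := by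
  have := congrArg (fun q => q.coeff i) hp.map_conj
  exact Complex.conj_eq_iff_re.1 (by simpa using this)

lemma re_coeff_nonneg (hp : polPos p) (i : ℕ) : 0 ≤ (p.coeff i).re := by
  rcases le_or_gt i p.natDegree with hi | hi
  · exact (hp.2 i hi).2.le
  · simp [coeff_eq_zero_of_natDegree_lt hi]

lemma eval_one_eq (hp : polPos p) : p.eval 1 = ((p.eval 1).re : ℂ) := by
  rw [eval_eq_sum_range]
  simp [hp.ofReal_re_coeff]

lemma re_eval_one_pos (hp : polPos p) : 0 < (p.eval 1).re := by
  rw [eval_eq_sum_range]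
  simp only [one_pow, mul_one, Complex.re_sum]
  exact Finset.sum_pos (fun i hi => (hp.2 i (Finset.mem_range_succ_iff.1 hi)).2) ⟨0, by simp⟩

lemma eval_one_ne_zero (hp : polPos p) : p.eval 1 ≠ 0 := fun h => by
  simpa [h] using hp.re_eval_one_pos

lemma ne_one_of_mem_roots (hp : polPos p) {z : ℂ} (hz : z ∈ p.roots) : z ≠ 1 := fun h =>
  hp.eval_one_ne_zero (h ▸ isRoot_of_mem_roots hz)

end polPos

lemma exists_realCoeff_eq {p : ℂ[X]} (hp : polPos p) {z : Fin n → ℂ}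
    (hz : Finset.univ.val.map z = p.roots) :
    ∃ σ : Fin (n + 1) → Fin (n + 1), Function.Involutive σ ∧ σ 0 = 0 ∧ ∃ v : Fin (n + 1) → ℝ,
      conjPairVec σ v = rootCoords ((p.eval 1).re : ℂ) z ∧
      (∀ i, |v i| ≤ ‖rootCoords ((p.eval 1).re : ℂ) z i‖) ∧
      realCoeff σ v = fun i : Fin (n + 1) => (p.coeff i).re := by
  obtain ⟨σ, hσ, hconj, hfix⟩ :=
    exists_involutive_apply_eq_conj (map_conj_rootCoords hp.map_conj hz (p.eval 1).re)
  obtain ⟨v, hv, hle⟩ := exists_conjPairVec_eq hσ hconj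
  have h0 : σ 0 = 0 := hfix 0 (by simp [rootCoords])
  refine ⟨σ, hσ, h0, v, hv, hle, funext fun i => ?_⟩
  have hi := ofReal_realCoeff hσ h0 v i
  rw [hv, ← hp.eval_one_eq, coordPoly_rootCoords hp.eval_one_ne_zero hz] at hi
  rw [← hi, Complex.ofReal_re]

/-- The real parameters with conjugation pattern `σ` in the box `0 ≤ v 0 ≤ S`, `|v (j + 1)| ≤ B`
whose complex coordinates have Vandermonde determinant at most `E`. -/
def paramRegion (σ : Fin (n + 1) → Fin (n + 1)) (S B E : ℝ) : Set (Fin (n + 1) → ℝ) :=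
  Set.Icc (Fin.cons 0 fun _ => -B) (Fin.cons S fun _ => B) ∩
    {v | ‖(vandermonde (Fin.tail (conjPairVec σ v))).det‖ ≤ E}

lemma measurableSet_paramRegion (σ : Fin (n + 1) → Fin (n + 1)) (S B E : ℝ) :
    MeasurableSet (paramRegion σ S B E) := by
  have hσ : Continuous (conjPairVec σ) := (conjPairVec σ).continuous_of_finiteDimensional
  have hdet : Continuous fun v => (vandermonde (Fin.tail (conjPairVec σ v))).det := by
    refine Continuous.matrix_det (continuous_matrix fun i j => ?_)
    simp only [vandermonde_apply, Fin.tail]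
    fun_prop
  exact measurableSet_Icc.inter (isClosed_le hdet.norm continuous_const).measurableSet

lemma volume_image_realCoeff_le {σ : Fin (n + 1) → Fin (n + 1)} (hσ : Function.Involutive σ)
    (h0 : σ 0 = 0) {S B : ℝ} (hS : 0 ≤ S) (hB : 0 ≤ B) (E : ℝ) :
    volume (realCoeff σ '' paramRegion σ S B E) ≤
      ENNReal.ofReal (S ^ n * E * (n + 1).factorial * (S * (2 * B) ^ n)) := by
  have hdet : ∀ v ∈ paramRegion σ S B E,
      |(realJacobian σ v).det| ≤ S ^ n * E * (n + 1).factorial := by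
    rintro v ⟨⟨hlow, hupp⟩, hE⟩
    have hv0 : |v 0| ≤ S := by
      rw [abs_of_nonneg (by simpa using hlow 0)]
      simpa using hupp 0
    refine (abs_det_realJacobian_le hσ h0 v).trans ?_
    gcongr
    exact hE
  calc volume (realCoeff σ '' paramRegion σ S B E)
      ≤ ∫⁻ v in paramRegion σ S B E, ENNReal.ofReal |(realJacobian σ v).det| := by
        simpa [← toLin'_apply'] using! addHaar_image_le_lintegral_abs_det_fderiv volume
          (measurableSet_paramRegion σ S B E)
          fun v _ => (hasFDerivAt_realCoeff σ v).hasFDerivWithinAt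
    _ ≤ ∫⁻ _ in paramRegion σ S B E, ENNReal.ofReal (S ^ n * E * (n + 1).factorial) :=
        setLIntegral_mono measurable_const fun v hv => ENNReal.ofReal_le_ofReal (hdet v hv)
    _ ≤ ENNReal.ofReal (S ^ n * E * (n + 1).factorial) *
          volume (Set.Icc (Fin.cons 0 fun _ => -B) (Fin.cons S fun _ => B) :
            Set (Fin (n + 1) → ℝ)) := by
        rw [setLIntegral_const]
        gcongr
        exact Set.inter_subset_left
    _ = ENNReal.ofReal (S ^ n * E * (n + 1).factorial * (S * (2 * B) ^ n)) := by
        rw [Real.volume_Icc_pi, Fin.prod_univ_succ,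
          ENNReal.ofReal_mul' (q := S * (2 * B) ^ n) (by positivity), ENNReal.ofReal_mul hS,
          ENNReal.ofReal_pow (by positivity)]
        simp [two_mul]

end RootCoordinates

noncomputable section MahlerBound

lemma eval_le_pow_natDegree_mul_eval_one {q : ℝ[X]} (hq : ∀ k, 0 ≤ q.coeff k) {x : ℝ}
    (hx : 1 ≤ x) : q.eval x ≤ x ^ q.natDegree * q.eval 1 := by
  rw [eval_eq_sum_range, eval_eq_sum_range, Finset.mul_sum]
  refine Finset.sum_le_sum fun i hi => ?_
  rw [one_pow, mul_one, mul_comm]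
  exact mul_le_mul_of_nonneg_right
    (pow_le_pow_right₀ hx (Finset.mem_range_succ_iff.1 hi)) (hq i)

lemma coeff_taylor_nonneg {q : ℝ[X]} (hq : ∀ k, 0 ≤ q.coeff k) {x : ℝ} (hx : 0 ≤ x) (k : ℕ) :
    0 ≤ (taylor x q).coeff k := by
  rw [taylor_coeff, eval_eq_sum_range]
  refine Finset.sum_nonneg fun i _ => ?_
  rw [hasseDeriv_coeff]
  have := hq (i + k)
  positivity

lemma mahlerMeasure_map_ofReal_le_eval_one {q : ℝ[X]} (hq : ∀ k, 0 ≤ q.coeff k) :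
    (q.map Complex.ofRealHom).mahlerMeasure ≤ q.eval 1 := by
  refine (mahlerMeasure_le_sum_norm_coeff _).trans_eq ?_
  rw [sum_over_range' _ (by simp) _ (Nat.lt_succ_of_le natDegree_map_le), eval_eq_sum_range]
  simp [abs_of_nonneg (hq _)]

lemma mahlerMeasure_one_add_C_mul_X (a : ℂ) : (1 + C a * X).mahlerMeasure = max 1 ‖a‖ := by
  rcases eq_or_ne a 0 with rfl | ha
  · simp
  · rw [add_comm, ← C_1, mahlerMeasure_C_mul_X_add_C ha]
    simp [max_comm]

lemma mahlerMeasure_finsetProd {ι : Type*} (s : Finset ι) (f : ι → ℂ[X]) :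
    (∏ i ∈ s, f i).mahlerMeasure = ∏ i ∈ s, (f i).mahlerMeasure := by
  rw [Finset.prod, prod_mahlerMeasure_eq_mahlerMeasure_prod, Multiset.map_map]
  rfl

variable {n : ℕ}

lemma mahlerMeasure_coordPoly_comp (w : Fin (n + 1) → ℂ) {r : ℝ} (hr : 0 ≤ r) :
    ((taylor 1 (coordPoly w)).comp (C (r : ℂ) * X)).mahlerMeasure =
      ‖w 0‖ * ∏ j : Fin n, max 1 (r * ‖w j.succ‖) := by
  have hcomp : (taylor 1 (coordPoly w)).comp (C (r : ℂ) * X) =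
      C (w 0) * ∏ j : Fin n, (1 + C (-(r * w j.succ)) * X) := by
    rw [coordPoly_eq, taylor_apply]
    simp only [mul_comp, prod_comp, C_comp, add_comp, sub_comp, one_comp, X_comp]
    congr 1
    refine Finset.prod_congr rfl fun j _ => ?_
    simp only [C_neg, C_mul, C_1]
    ring
  simp only [hcomp, mahlerMeasure_mul, mahlerMeasure_const, mahlerMeasure_finsetProd,
    mahlerMeasure_one_add_C_mul_X]
  simp [abs_of_nonneg hr]

lemma polPos.prod_max_one_le {p : ℂ[X]} (hp : polPos p) {z : Fin n → ℂ}
    (hz : Finset.univ.val.map z = p.roots) {r : ℝ} (hr : 0 ≤ r) :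
    ∏ j, max 1 (r * ‖(z j - 1)⁻¹‖) ≤ (1 + r) ^ n := by
  obtain ⟨q, hq⟩ : p ∈ lifts Complex.ofRealHom :=
    (lifts_iff_coeff_lifts p).2 fun i => ⟨(p.coeff i).re, hp.ofReal_re_coeff i⟩
  replace hq : q.map Complex.ofRealHom = p := hq
  have hdeg : q.natDegree = n := by
    rw [← natDegree_map Complex.ofRealHom, hq, (IsAlgClosed.splits p).natDegree_eq_card_roots, ← hz]
    simp
  have hq0 (k : ℕ) : 0 ≤ q.coeff k := by
    have := hp.re_coeff_nonneg k
    rwa [← hq, coeff_map, Complex.ofRealHom_eq_coe, Complex.ofReal_re] at this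
  have hq1 : p.eval 1 = (q.eval 1 : ℝ) := by
    rw [← hq, ← Complex.ofReal_one, ← Complex.ofRealHom_eq_coe, eval_map_apply]
    rfl
  have hpos : 0 < q.eval 1 := by simpa [hq1] using hp.re_eval_one_pos
  have hcomp : ((taylor 1 q).comp (C r * X)).map Complex.ofRealHom =
      (taylor 1 (coordPoly (rootCoords (p.eval 1) z))).comp (C (r : ℂ) * X) := by
    rw [coordPoly_rootCoords hp.eval_one_ne_zero hz, ← hq, taylor_apply, taylor_apply]
    simp [Polynomial.map_comp]
  have hbound : q.eval 1 * ∏ j, max 1 (r * ‖(z j - 1)⁻¹‖) ≤ q.eval (1 + r) :=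
    calc q.eval 1 * ∏ j, max 1 (r * ‖(z j - 1)⁻¹‖)
        = (((taylor 1 q).comp (C r * X)).map Complex.ofRealHom).mahlerMeasure := by
          rw [hcomp, mahlerMeasure_coordPoly_comp _ hr]
          simp [rootCoords, hq1, abs_of_pos hpos]
      _ ≤ ((taylor 1 q).comp (C r * X)).eval 1 := mahlerMeasure_map_ofReal_le_eval_one fun k => by
          rw [comp_C_mul_X_coeff]
          exact mul_nonneg (coeff_taylor_nonneg hq0 zero_le_one k) (by positivity)
      _ = q.eval (1 + r) := by simp [taylor_eval, add_comm]
  have hgrow := eval_le_pow_natDegree_mul_eval_one hq0 (le_add_of_nonneg_right hr)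
  rw [hdeg] at hgrow
  exact le_of_mul_le_mul_left (hbound.trans (hgrow.trans_eq (mul_comm _ _))) hpos

lemma polPos.norm_inv_sub_one_le {p : ℂ[X]} (hp : polPos p) {z : Fin n → ℂ}
    (hz : Finset.univ.val.map z = p.roots) (j : Fin n) : ‖(z j - 1)⁻¹‖ ≤ 3 * n := by
  have hn : (0 : ℝ) < n := by exact_mod_cast j.pos
  rw [mul_comm, ← inv_mul_le_iff₀ hn]
  calc (n : ℝ)⁻¹ * ‖(z j - 1)⁻¹‖
      ≤ ∏ i, max 1 ((n : ℝ)⁻¹ * ‖(z i - 1)⁻¹‖) := by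
        simpa only [max_comm] using
          Finset.le_prod_max_one (Finset.mem_univ j) fun i => (n : ℝ)⁻¹ * ‖(z i - 1)⁻¹‖
    _ ≤ (1 + (n : ℝ)⁻¹) ^ n := hp.prod_max_one_le hz (by positivity)
    _ ≤ Real.exp (n : ℝ)⁻¹ ^ n := by
        gcongr
        rw [add_comm]
        exact Real.add_one_le_exp _
    _ = Real.exp 1 := by rw [← Real.exp_nat_mul, mul_inv_cancel₀ hn.ne']
    _ ≤ 3 := Real.exp_one_lt_three.le

end MahlerBound

noncomputable section RegularizedKernel

open Matrix

lemma min_div_div_le_add_div_add {α : Type*} [Field α] [LinearOrder α] [IsStrictOrderedRing α]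
    {a b c d : α} (hb : 0 < b) (hd : 0 < d) :
    min (a / b) (c / d) ≤ (a + c) / (b + d) := by
  rw [le_div_iff₀ (by positivity), mul_add]
  refine add_le_add ?_ ?_
  · rw [← le_div_iff₀ hb]
    exact min_le_left _ _
  · rw [← le_div_iff₀ hd]
    exact min_le_right _ _

lemma abs_max_neg_min_le (m y : ℝ) : |max (-m) (min m y)| ≤ |m| :=
  abs_le.2 ⟨(neg_le_neg (le_abs_self m)).trans (le_max_left _ _),
    max_le (neg_le_abs m) ((min_le_left _ _).trans (le_abs_self m))⟩

/-- A bounded continuous regularization of the kernel `-f`: the ratio `|z - w| / (|1 - z| |1 - w|)`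
is replaced by its mediant with `δ / (δ e⁻ᵐ) = eᵐ`, and its logarithm is truncated at `±m`. -/
def regKernel (m δ : ℝ) (q : ℂ × ℂ) : ℝ :=
  max (-m) (min m (Real.log
    ((‖q.1 - q.2‖ + δ) / (‖1 - q.1‖ * ‖1 - q.2‖ + δ * Real.exp (-m)))))

lemma neg_le_regKernel (m δ : ℝ) (q : ℂ × ℂ) : -m ≤ regKernel m δ q := le_max_left _ _

lemma abs_regKernel_le (m δ : ℝ) (q : ℂ × ℂ) : |regKernel m δ q| ≤ |m| :=
  abs_max_neg_min_le m _

lemma continuous_regKernel (m : ℝ) {δ : ℝ} (hδ : 0 < δ) : Continuous (regKernel m δ) := by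
  have hden (q : ℂ × ℂ) : 0 < ‖1 - q.1‖ * ‖1 - q.2‖ + δ * Real.exp (-m) := by positivity
  refine continuous_const.max (continuous_const.min (Continuous.log ?_ fun q => ?_))
  · exact Continuous.div (by fun_prop) (by fun_prop) fun q => (hden q).ne'
  · have := hden q
    positivity

lemma integrable_regKernel (m : ℝ) {δ : ℝ} (hδ : 0 < δ) (ν : Measure (ℂ × ℂ)) [IsFiniteMeasure ν] :
    Integrable (regKernel m δ) ν :=
  Integrable.of_bound (continuous_regKernel m hδ).aestronglyMeasurable |m|
    (ae_of_all _ (abs_regKernel_le m δ))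

lemma min_norm_inv_sub_inv_le_exp_regKernel (m : ℝ) {δ : ℝ} (hδ : 0 < δ) {z w : ℂ} (hz : z ≠ 1)
    (hw : w ≠ 1) :
    min ‖(z - 1)⁻¹ - (w - 1)⁻¹‖ (Real.exp m) ≤ Real.exp (regKernel m δ (z, w)) := by
  have hz' : 0 < ‖1 - z‖ := norm_pos_iff.2 (sub_ne_zero.2 hz.symm)
  have hw' : 0 < ‖1 - w‖ := norm_pos_iff.2 (sub_ne_zero.2 hw.symm)
  have hdist : ‖(z - 1)⁻¹ - (w - 1)⁻¹‖ = ‖z - w‖ / (‖1 - z‖ * ‖1 - w‖) := by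
    rw [inv_sub_inv (sub_ne_zero.2 hz) (sub_ne_zero.2 hw), norm_div, norm_mul, norm_sub_rev z 1,
      norm_sub_rev w 1, sub_sub_sub_cancel_right, norm_sub_rev w z]
  have hexp : Real.exp m = δ / (δ * Real.exp (-m)) := by
    rw [Real.exp_neg]
    field_simp
  calc min ‖(z - 1)⁻¹ - (w - 1)⁻¹‖ (Real.exp m)
      ≤ min (Real.exp m) ((‖z - w‖ + δ) / (‖1 - z‖ * ‖1 - w‖ + δ * Real.exp (-m))) := by
        refine le_min (min_le_right _ _) ?_
        rw [hdist, hexp]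
        exact min_div_div_le_add_div_add (by positivity) (by positivity)
    _ = Real.exp (min m (Real.log
          ((‖z - w‖ + δ) / (‖1 - z‖ * ‖1 - w‖ + δ * Real.exp (-m))))) := by
        rw [Real.exp_monotone.map_min, Real.exp_log (by positivity)]
    _ ≤ Real.exp (regKernel m δ (z, w)) := Real.exp_le_exp.2 (le_max_right _ _)

lemma norm_sub_le_min_mul_max_mul_max {E : Type*} [SeminormedAddCommGroup E] (x y : E) {r : ℝ}
    (hr : 0 < r) :
    ‖x - y‖ ≤ min ‖x - y‖ r * (max 1 (2 * r⁻¹ * ‖x‖) * max 1 (2 * r⁻¹ * ‖y‖)) := by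
  set a := max 1 (2 * r⁻¹ * ‖x‖) with ha
  set b := max 1 (2 * r⁻¹ * ‖y‖) with hb
  have ha1 : 1 ≤ a := le_max_left _ _
  have hb1 : 1 ≤ b := le_max_left _ _
  rcases le_total ‖x - y‖ r with h | h
  · rw [min_eq_left h]
    exact le_mul_of_one_le_right (norm_nonneg _) (one_le_mul_of_one_le_of_one_le ha1 hb1)
  · have hx : 2 * ‖x‖ ≤ r * a := by
      have := le_max_right 1 (2 * r⁻¹ * ‖x‖)
      rw [← ha, mul_right_comm, ← div_eq_mul_inv, div_le_iff₀' hr] at this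
      exact this
    have hy : 2 * ‖y‖ ≤ r * b := by
      have := le_max_right 1 (2 * r⁻¹ * ‖y‖)
      rw [← hb, mul_right_comm, ← div_eq_mul_inv, div_le_iff₀' hr] at this
      exact this
    rw [min_eq_right h]
    have hab : a + b ≤ 2 * (a * b) := by nlinarith
    nlinarith [norm_sub_le x y, mul_le_mul_of_nonneg_left hab hr.le]

variable {n : ℕ}

lemma norm_det_vandermonde_sq_le (m : ℝ) {δ : ℝ} (hδ : 0 < δ) {z : Fin n → ℂ} (hz : ∀ j, z j ≠ 1) :
    ‖(vandermonde fun j => (z j - 1)⁻¹).det‖ ^ 2 ≤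
      Real.exp (n * m + ∑ i, ∑ j, regKernel m δ (z i, z j)) *
        (∏ j, max 1 (2 * Real.exp (-m) * ‖(z j - 1)⁻¹‖)) ^ (2 * n) := by
  set y : Fin n → ℂ := fun j => (z j - 1)⁻¹
  set c : Fin n → ℝ := fun j => max 1 (2 * Real.exp (-m) * ‖y j‖)
  have hc (j) : 1 ≤ c j := le_max_left _ _
  have hc0 (j) : 0 < c j := zero_lt_one.trans_le (hc j)
  set g : Fin n → Fin n → ℝ := fun i j => Real.exp (regKernel m δ (z i, z j)) * (c i * c j)
  have hg (i j) : 0 ≤ g i j := by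
    have := hc0 i
    have := hc0 j
    positivity
  have hoff (i j) : ‖y i - y j‖ ≤ g i j := by
    refine (norm_sub_le_min_mul_max_mul_max (y i) (y j) (Real.exp_pos m)).trans ?_
    rw [← Real.exp_neg]
    have := hc0 i
    have := hc0 j
    exact mul_le_mul_of_nonneg_right
      (min_norm_inv_sub_inv_le_exp_regKernel m hδ (hz i) (hz j)) (by positivity)
  have hdiag (i) : 1 ≤ Real.exp m * g i i := by
    rw [← mul_assoc, ← Real.exp_add]
    refine one_le_mul_of_one_le_of_one_le (Real.one_le_exp ?_)
      (one_le_mul_of_one_le_of_one_le (hc i) (hc i))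
    linarith [neg_le_regKernel m δ (z i, z i)]
  calc ‖(vandermonde y).det‖ ^ 2
      = ∏ i, ∏ j ∈ ({i}ᶜ : Finset (Fin n)), ‖y i - y j‖ := norm_det_vandermonde_sq y
    _ ≤ ∏ i, (Real.exp m * ∏ j, g i j) := by
        refine Finset.prod_le_prod (fun i _ => by positivity) fun i _ => ?_
        have hcompl : 0 ≤ ∏ j ∈ ({i}ᶜ : Finset (Fin n)), g i j :=
          Finset.prod_nonneg fun j _ => hg i j
        rw [← Finset.prod_compl_mul_prod {i} (g i), Finset.prod_singleton, mul_left_comm]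
        exact (Finset.prod_le_prod (fun j _ => norm_nonneg _) fun j _ => hoff i j).trans
          (le_mul_of_one_le_right hcompl (hdiag i))
    _ = Real.exp (n * m + ∑ i, ∑ j, regKernel m δ (z i, z j)) * (∏ j, c j) ^ (2 * n) := by
        simp only [g, Finset.prod_mul_distrib, Finset.prod_const, Finset.prod_pow, Finset.card_univ,
          Fintype.card_fin, Real.exp_add, Real.exp_sum, Real.exp_nat_mul]
        ring

lemma norm_det_vandermonde_roots_le {p : ℂ[X]} (hp : polPos p) {z : Fin n → ℂ}
    (hz : Finset.univ.val.map z = p.roots) (m : ℝ) {δ : ℝ} (hδ : 0 < δ) :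
    ‖(vandermonde fun j => (z j - 1)⁻¹).det‖ ≤
      Real.exp ((n * m + ∑ i, ∑ j, regKernel m δ (z i, z j) + 4 * Real.exp (-m) * n ^ 2) / 2) := by
  have hz1 (j) : z j ≠ 1 :=
    hp.ne_one_of_mem_roots (hz ▸ Multiset.mem_map_of_mem z (Finset.mem_univ_val j))
  have hmahler : ∏ j, max 1 (2 * Real.exp (-m) * ‖(z j - 1)⁻¹‖) ≤
      Real.exp (n * (2 * Real.exp (-m))) := by
    refine (hp.prod_max_one_le hz (by positivity)).trans ?_
    rw [Real.exp_nat_mul, add_comm]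
    gcongr
    exact Real.add_one_le_exp _
  refine le_of_sq_le_sq ((norm_det_vandermonde_sq_le m hδ hz1).trans ?_) (Real.exp_pos _).le
  calc _ ≤ Real.exp (n * m + ∑ i, ∑ j, regKernel m δ (z i, z j)) *
        Real.exp (n * (2 * Real.exp (-m))) ^ (2 * n) := by gcongr
    _ = _ := by
        rw [← Real.exp_nat_mul, ← Real.exp_nat_mul, ← Real.exp_add]
        push_cast
        ring_nf

section ZeroMeasure

variable {p : ℂ[X]} {z : Fin n → ℂ}

lemma integral_zeroMeasure (hz : Finset.univ.val.map z = p.roots) (φ : ℂ → ℝ) :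
    ∫ x, φ x ∂zeroMeasure p = (n : ℝ)⁻¹ * ∑ j, φ (z j) := by
  have hn : p.natDegree = n := by
    rw [(IsAlgClosed.splits p).natDegree_eq_card_roots, ← hz]
    simp
  have hsum : (p.roots.map Measure.dirac).sum = ∑ j, Measure.dirac (z j) := by
    rw [← hz, Multiset.map_map]
    rfl
  rw [zeroMeasure, hsum, hn, integral_smul_measure, integral_finsetSum_measure]
  · simp
  · exact fun j _ => integrable_dirac (by simp)

lemma integral_prod_zeroMeasure (hz : Finset.univ.val.map z = p.roots)
    [IsProbabilityMeasure (zeroMeasure p)] {φ : ℂ × ℂ → ℝ}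
    (hφ : Integrable φ ((zeroMeasure p).prod (zeroMeasure p))) :
    ∫ q, φ q ∂(zeroMeasure p).prod (zeroMeasure p) =
      ((n : ℝ) ^ 2)⁻¹ * ∑ i, ∑ j, φ (z i, z j) := by
  simp only [integral_prod φ hφ, integral_zeroMeasure hz]
  rw [← Finset.mul_sum]
  ring

end ZeroMeasure

end RegularizedKernel

noncomputable section ProbabilityBound

lemma polPos.exists_mem_image_paramRegion {n : ℕ} {p : ℂ[X]} (hp : polPos p) (hn : p.natDegree = n)
    {T : ℝ} (hT : ∀ i ≤ n, (p.coeff i).re ≤ T) (m : ℝ) {δ : ℝ} (hδ : 0 < δ)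
    [IsProbabilityMeasure (zeroMeasure p)] {I : ℝ}
    (hI : ∫ q, regKernel m δ q ∂(zeroMeasure p).prod (zeroMeasure p) ≤ I) :
    ∃ σ : Fin (n + 1) → Fin (n + 1), Function.Involutive σ ∧ σ 0 = 0 ∧
      (fun i : Fin (n + 1) => (p.coeff i).re) ∈ realCoeff σ '' paramRegion σ ((n + 1) * T) (3 * n)
        (Real.exp (n * m / 2 + n ^ 2 * (I / 2 + 2 * Real.exp (-m)))) := by
  have hn0 : (0 : ℝ) < n := by exact_mod_cast hn ▸ hp.1
  obtain ⟨z, hz⟩ := exists_map_univ_eq_roots hn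
  obtain ⟨σ, hσ, h0, v, hv, hle, hcoeff⟩ := exists_realCoeff_eq hp hz
  have hv0 : v 0 = (p.eval 1).re := by
    simpa [conjPairVec_apply, h0, rootCoords] using congrFun hv 0
  have hsucc (j : Fin n) : |v j.succ| ≤ 3 * n :=
    (hle j.succ).trans (by simpa [rootCoords] using hp.norm_inv_sub_one_le hz j)
  have hsum : (p.eval 1).re ≤ (n + 1) * T := by
    rw [eval_eq_sum_range, hn]
    simpa using Finset.sum_le_card_nsmul (Finset.range (n + 1)) (fun i => (p.coeff i).re) T
      fun i hi => hT i (Finset.mem_range_succ_iff.1 hi)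
  refine ⟨σ, hσ, h0, hcoeff ▸ Set.mem_image_of_mem _ ⟨⟨?_, ?_⟩, ?_⟩⟩
  · refine Fin.cases ?_ fun j => ?_
    · simpa [hv0] using hp.re_eval_one_pos.le
    · simpa using (abs_le.1 (hsucc j)).1
  · refine Fin.cases ?_ fun j => ?_
    · simpa [hv0] using hsum
    · simpa using (abs_le.1 (hsucc j)).2
  · have htail : Fin.tail (conjPairVec σ v) = fun j => (z j - 1)⁻¹ := by
      rw [hv, rootCoords, Fin.tail_cons]
    rw [integral_prod_zeroMeasure hz (integrable_regKernel m hδ _),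
      inv_mul_le_iff₀ (by positivity)] at hI
    rw [Set.mem_ofPred_eq, htail]
    refine (norm_det_vandermonde_roots_le hp hz m hδ).trans (Real.exp_le_exp.2 ?_)
    linarith

lemma measure_pi_mono {ι : Type*} [Fintype ι] {α : ι → Type*} [∀ i, MeasurableSpace (α i)]
    {μ ν : ∀ i, Measure (α i)} (h : ∀ i, μ i ≤ ν i) : Measure.pi μ ≤ Measure.pi ν := by
  refine Measure.le_iff.2 fun s hs => ?_
  rw [Measure.pi_def, Measure.pi_def, toMeasure_apply _ _ hs, toMeasure_apply _ _ hs]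
  exact OuterMeasure.le_pi.2 (fun t _ => (OuterMeasure.pi_pi_le _ t).trans
    (Finset.prod_le_prod' fun i _ => h i (t i))) s

lemma measure_pi_smul {ι : Type*} [Fintype ι] {α : ι → Type*} [∀ i, MeasurableSpace (α i)]
    (μ : ∀ i, Measure (α i)) [∀ i, SigmaFinite (μ i)] (C : ℝ≥0) :
    Measure.pi (fun i => C • μ i) = C ^ Fintype.card ι • Measure.pi μ :=
  Measure.pi_eq fun s _ => by
    simp only [Measure.smul_apply, Measure.pi_pi, ENNReal.smul_def, smul_eq_mul,
      Finset.prod_mul_distrib, Finset.prod_const, Finset.card_univ, ENNReal.coe_pow]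

variable {Ω : Type*}

section RandPoly

variable (ξ : ℕ → Ω → ℝ) (n : ℕ) (ω : Ω)

lemma coeff_randPoly (i : ℕ) :
    (randPoly ξ n ω).coeff i = if i ≤ n then (ξ i ω : ℂ) else 0 := by
  simp [randPoly, coeff_X_pow]

variable {ξ n ω}

lemma natDegree_randPoly (h : ξ n ω ≠ 0) : (randPoly ξ n ω).natDegree = n := by
  refine natDegree_eq_of_le_of_coeff_ne_zero (natDegree_le_iff_coeff_eq_zero.2 fun k hk => ?_) ?_
  · rw [coeff_randPoly, if_neg hk.not_ge]
  · simpa [coeff_randPoly] using h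

lemma polPos_randPoly (hn : 1 ≤ n) (h : ∀ j, 0 < ξ j ω) : polPos (randPoly ξ n ω) := by
  rw [polPos, natDegree_randPoly (h n).ne']
  refine ⟨hn, fun i hi => ?_⟩
  simp [coeff_randPoly, hi, h i]

end RandPoly

variable [MeasurableSpace Ω] {P : Measure Ω}

lemma map_le_pow_smul_volume {ι : Type*} [Fintype ι] {X : ι → Ω → ℝ}
    (hmeas : ∀ i, AEMeasurable (X i) P) (hindep : iIndepFun X P) {C : ℝ≥0}
    (hdens : ∀ i, P.map (X i) ≤ C • volume) :
    P.map (fun ω i => X i ω) ≤ C ^ Fintype.card ι • volume := by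
  rw [hindep.map_fun_eq_pi_map hmeas, volume_pi, ← measure_pi_smul]
  exact measure_pi_mono hdens

/-- An upper bound for the probability that the bounded energy of the zeros of `P_n` is at most `I`:
the probability that some coefficient exceeds `T`, plus the volume of the region of parameters
realizing this energy with coefficients below `T`, summed over conjugation patterns. -/
def energyBound (c C m I T : ℝ) (n : ℕ) : ℝ :=
  (n + 1) * Real.exp (-(c * T)) + (n + 1) ^ (n + 1) * (C ^ (n + 1) *
    (((n + 1) * T) ^ n * Real.exp (n * m / 2 + n ^ 2 * (I / 2 + 2 * Real.exp (-m))) *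
      (n + 1).factorial * ((n + 1) * T * (2 * (3 * n)) ^ n)))

variable {ξ : ℕ → Ω → ℝ}

lemma measure_exists_lt_le {c : ℝ}
    (htail : ∀ j t, 0 ≤ t → P {ω | t < ξ j ω} ≤ ENNReal.ofReal (Real.exp (-(c * t))))
    (n : ℕ) {T : ℝ} (hT : 0 ≤ T) :
    P {ω | ∃ j ≤ n, T < ξ j ω} ≤ ENNReal.ofReal ((n + 1) * Real.exp (-(c * T))) := by
  have hunion : {ω | ∃ j ≤ n, T < ξ j ω} = ⋃ j ∈ Finset.range (n + 1), {ω | T < ξ j ω} := by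
    ext ω
    simp
  rw [hunion]
  refine (measure_biUnion_finset_le _ _).trans
    ((Finset.sum_le_sum fun j _ => htail j T hT).trans_eq ?_)
  rw [Finset.sum_const, Finset.card_range, ← ENNReal.ofReal_nsmul, nsmul_eq_mul, Nat.cast_add_one]

lemma measure_mem_image_paramRegion_le (hmeas : ∀ j, AEMeasurable (ξ j) P) (hindep : iIndepFun ξ P)
    {C : ℝ≥0} (hdens : ∀ j, P.map (ξ j) ≤ C • volume) (n : ℕ) {S B : ℝ} (hS : 0 ≤ S) (hB : 0 ≤ B)
    {E : ℝ} (hE : 0 ≤ E) :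
    P {ω | ∃ σ : Fin (n + 1) → Fin (n + 1), Function.Involutive σ ∧ σ 0 = 0 ∧
        (fun i : Fin (n + 1) => ξ i ω) ∈ realCoeff σ '' paramRegion σ S B E} ≤
      ENNReal.ofReal ((n + 1) ^ (n + 1) *
        (C ^ (n + 1) * (S ^ n * E * (n + 1).factorial * (S * (2 * B) ^ n)))) := by
  set X : Fin (n + 1) → Ω → ℝ := fun i => ξ i
  set V := S ^ n * E * (n + 1).factorial * (S * (2 * B) ^ n)
  set F : Finset (Fin (n + 1) → Fin (n + 1)) := {σ | Function.Involutive σ ∧ σ 0 = 0}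
  have hX (i) : AEMeasurable (X i) P := hmeas i
  have hlaw := map_le_pow_smul_volume hX (hindep.precomp Fin.val_injective) fun i => hdens i
  have hV (σ) (hσ : σ ∈ F) : P ((fun ω i => X i ω) ⁻¹' (realCoeff σ '' paramRegion σ S B E)) ≤
      ENNReal.ofReal (C ^ (n + 1) * V) := by
    obtain ⟨hinv, h0⟩ := (Finset.mem_filter.1 hσ).2
    refine (Measure.le_map_apply (aemeasurable_pi_lambda _ hX) _).trans ((hlaw _).trans ?_)
    rw [Fintype.card_fin, Measure.smul_apply, ENNReal.smul_def, smul_eq_mul,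
      ENNReal.ofReal_mul (by positivity), ← NNReal.coe_pow, ENNReal.ofReal_coe_nnreal]
    gcongr
    exact volume_image_realCoeff_le hinv h0 hS hB E
  have hcard : (F.card : ℝ) ≤ (n + 1) ^ (n + 1) := by
    have := F.card_le_univ
    rw [Fintype.card_fun, Fintype.card_fin] at this
    exact_mod_cast this
  calc _ ≤ P (⋃ σ ∈ F, (fun ω i => X i ω) ⁻¹' (realCoeff σ '' paramRegion σ S B E)) := by
        refine measure_mono fun ω => ?_
        rintro ⟨σ, hinv, h0, hmem⟩
        exact Set.mem_biUnion (Finset.mem_filter.2 ⟨Finset.mem_univ σ, hinv, h0⟩) hmem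
    _ ≤ ∑ _ ∈ F, ENNReal.ofReal (C ^ (n + 1) * V) :=
        (measure_biUnion_finset_le _ _).trans (Finset.sum_le_sum hV)
    _ ≤ ENNReal.ofReal ((n + 1) ^ (n + 1) * (C ^ (n + 1) * V)) := by
        rw [Finset.sum_const, ← ENNReal.ofReal_nsmul, nsmul_eq_mul]
        gcongr

lemma measure_integral_regKernel_le (hmeas : ∀ j, AEMeasurable (ξ j) P) (hindep : iIndepFun ξ P)
    (hpos : ∀ j, ∀ᵐ ω ∂P, 0 < ξ j ω) {C : ℝ≥0} (hdens : ∀ j, P.map (ξ j) ≤ C • volume) {c : ℝ}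
    (htail : ∀ j t, 0 ≤ t → P {ω | t < ξ j ω} ≤ ENNReal.ofReal (Real.exp (-(c * t))))
    {n : ℕ} (hn : 1 ≤ n) {L : Ω → ProbabilityMeasure ℂ}
    (hL : ∀ ω, (∀ j, 0 < ξ j ω) → (L ω : Measure ℂ) = zeroMeasure (randPoly ξ n ω))
    (m : ℝ) {δ : ℝ} (hδ : 0 < δ) (I : ℝ) {T : ℝ} (hT : 0 ≤ T) :
    P {ω | ∫ q, regKernel m δ q ∂(L ω : Measure ℂ).prod (L ω : Measure ℂ) ≤ I} ≤
      ENNReal.ofReal (energyBound c C m I T n) := by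
  set E := Real.exp (n * m / 2 + n ^ 2 * (I / 2 + 2 * Real.exp (-m)))
  set R : Set Ω := {ω | ∃ σ : Fin (n + 1) → Fin (n + 1), Function.Involutive σ ∧ σ 0 = 0 ∧
    (fun i : Fin (n + 1) => ξ i ω) ∈ realCoeff σ '' paramRegion σ ((n + 1) * T) (3 * n) E}
  have hsub : {ω | ∫ q, regKernel m δ q ∂(L ω : Measure ℂ).prod (L ω : Measure ℂ) ≤ I} ≤ᵐ[P]
      ({ω | ∃ j ≤ n, T < ξ j ω} ∪ R : Set Ω) := by
    filter_upwards [ae_all_iff.2 hpos] with ω hω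
    intro (hI : ∫ q, regKernel m δ q ∂(L ω : Measure ℂ).prod (L ω : Measure ℂ) ≤ I)
    refine or_iff_not_imp_left.2 fun hlt => ?_
    have hle (j) (hj : j ≤ n) : ξ j ω ≤ T := not_lt.1 fun h => hlt ⟨j, hj, h⟩
    have hLω := hL ω hω
    have : IsProbabilityMeasure (zeroMeasure (randPoly ξ n ω)) := hLω ▸ inferInstance
    rw [hLω] at hI
    have hcoeff (i) (hi : i ≤ n) : ((randPoly ξ n ω).coeff i).re = ξ i ω := by
      simp [coeff_randPoly, hi]
    obtain ⟨σ, hσ, h0, hmem⟩ := (polPos_randPoly hn hω).exists_mem_image_paramRegion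
      (natDegree_randPoly (hω n).ne') (fun i hi => (hcoeff i hi).trans_le (hle i hi)) m hδ hI
    simp only [hcoeff _ (Fin.is_le _)] at hmem
    exact ⟨σ, hσ, h0, hmem⟩
  calc _ ≤ P ({ω | ∃ j ≤ n, T < ξ j ω} ∪ R) := measure_mono_ae hsub
    _ ≤ P {ω | ∃ j ≤ n, T < ξ j ω} + P R := measure_union_le _ _
    _ ≤ _ := add_le_add (measure_exists_lt_le htail n hT)
        (measure_mem_image_paramRegion_le hmeas hindep hdens n (by positivity) (by positivity)
          (Real.exp_pos _).le)
    _ = ENNReal.ofReal (energyBound c C m I T n) :=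
        (ENNReal.ofReal_add (by positivity) (by positivity)).symm

end ProbabilityBound

noncomputable section Asymptotics

lemma eventually_add_pow_le_exp (a : ℝ) (k : ℕ) {η : ℝ} (hη : 0 < η) :
    ∀ᶠ n : ℕ in atTop, ((n : ℝ) + a) ^ (k * (n + 1)) ≤ Real.exp (n ^ 2 * η) := by
  have hlim : Tendsto (fun n : ℕ => (n : ℝ) + a) atTop atTop :=
    tendsto_atTop_add_const_right _ _ tendsto_natCast_atTop_atTop
  have hlog := hlim.eventually
    (Real.isLittleO_log_id_atTop.bound (show 0 < η / (4 * (k + 1)) by positivity))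
  filter_upwards [hlog, hlim.eventually_gt_atTop 0, eventually_ge_atTop 1,
    tendsto_natCast_atTop_atTop.eventually_ge_atTop a] with n hlog hpos h1 ha
  have h1' : (1 : ℝ) ≤ n := by exact_mod_cast h1
  rw [id, Real.norm_of_nonneg hpos.le] at hlog
  rw [← Real.exp_log hpos, ← Real.exp_nat_mul, Real.exp_le_exp]
  push_cast
  calc (k * (n + 1) : ℝ) * Real.log (n + a)
      ≤ ((k + 1) * (2 * n)) * (η / (4 * (k + 1)) * (2 * n)) := by
        refine mul_le_mul_of_nonneg (by gcongr <;> linarith) ?_ (by positivity) (by positivity)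
        refine ((Real.le_norm_self _).trans hlog).trans ?_
        gcongr
        linarith
    _ = n ^ 2 * η := by
        field_simp
        ring

lemma eventually_add_one_mul_exp_neg_le {c : ℝ} (hc : 0 < c) (a : ℝ) :
    ∀ᶠ n : ℕ in atTop, ((n : ℝ) + 1) * Real.exp (-(c * n ^ 3)) ≤ Real.exp (n ^ 2 * a) := by
  filter_upwards [eventually_ge_atTop 1,
    tendsto_natCast_atTop_atTop.eventually_ge_atTop ((1 - a) / c)] with n h1 hn
  have h1' : (1 : ℝ) ≤ n := by exact_mod_cast h1
  rw [div_le_iff₀ hc] at hn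
  calc ((n : ℝ) + 1) * Real.exp (-(c * n ^ 3)) ≤ Real.exp n * Real.exp (-(c * n ^ 3)) := by
        gcongr
        exact Real.add_one_le_exp _
    _ = Real.exp (n - c * n ^ 3) := by rw [← Real.exp_add, sub_eq_add_neg]
    _ ≤ Real.exp (n ^ 2 * a) := by
        rw [Real.exp_le_exp]
        nlinarith [mul_le_mul_of_nonneg_left hn (sq_nonneg (n : ℝ))]

lemma eventually_paramVolume_le {C : ℝ} (hC : 0 ≤ C) (m a : ℝ) {η : ℝ} (hη : 0 < η) :
    ∀ᶠ n : ℕ in atTop, ((n : ℝ) + 1) ^ (n + 1) * (C ^ (n + 1) *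
      (((n + 1) * (n : ℝ) ^ 3) ^ n * Real.exp (n * m / 2 + n ^ 2 * a) *
        (n + 1).factorial * ((n + 1) * (n : ℝ) ^ 3 * (2 * (3 * n)) ^ n))) ≤
      Real.exp (n ^ 2 * (a + η)) := by
  filter_upwards [eventually_add_pow_le_exp (6 + C) 9 (half_pos hη),
    tendsto_natCast_atTop_atTop.eventually_ge_atTop (m / η)] with n hpow hm
  rw [div_le_iff₀ hη] at hm
  set N : ℝ := n + (6 + C)
  have : (0 : ℝ) ≤ n := n.cast_nonneg
  have hnN : n + 6 ≤ N := by simp only [N]; linarith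
  have hCN : C ≤ N := by simp only [N]; linarith
  have hfact : ((n + 1).factorial : ℝ) ≤ N ^ (n + 1) :=
    calc ((n + 1).factorial : ℝ) ≤ ((n + 1 : ℕ) : ℝ) ^ (n + 1) := by
          exact_mod_cast (n + 1).factorial_le_pow
      _ ≤ N ^ (n + 1) := by
          gcongr
          push_cast
          linarith
  have hcube : (n + 1) * (n : ℝ) ^ 3 ≤ N ^ 4 :=
    calc (n + 1) * (n : ℝ) ^ 3 ≤ N * N ^ 3 := by gcongr <;> linarith [hnN]
      _ = N ^ 4 := by ring
  calc _ ≤ N ^ (n + 1) * (N ^ (n + 1) * ((N ^ 4) ^ n * Real.exp (n * m / 2 + n ^ 2 * a) *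
        N ^ (n + 1) * (N ^ 4 * (N ^ 2) ^ n))) := by
        gcongr
        · linarith
        · nlinarith
    _ = N ^ (9 * n + 7) * Real.exp (n * m / 2 + n ^ 2 * a) := by ring_nf
    _ ≤ Real.exp (n ^ 2 * (η / 2)) * Real.exp (n ^ 2 * (η / 2) + n ^ 2 * a) := by
        gcongr
        · exact (pow_le_pow_right₀ (by linarith) (by omega)).trans hpow
        · nlinarith
    _ = Real.exp (n ^ 2 * (a + η)) := by
        rw [← Real.exp_add]
        ring_nf

lemma eventually_energyBound_le {c C : ℝ} (hc : 0 < c) (hC : 0 ≤ C) {m I x : ℝ}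
    (hx : I / 2 + 2 * Real.exp (-m) < x) :
    ∀ᶠ n : ℕ in atTop, energyBound c C m I (n ^ 3) n ≤ Real.exp (n ^ 2 * x) := by
  set a := I / 2 + 2 * Real.exp (-m)
  obtain ⟨η, hη⟩ : ∃ η, η = (x - a) / 2 := ⟨_, rfl⟩
  have hη0 : 0 < η := by linarith
  have hxη : x = η + (a + η) := by linarith
  filter_upwards [eventually_add_one_mul_exp_neg_le hc (a + η),
    eventually_paramVolume_le hC m a hη0, eventually_ge_atTop 1,
    tendsto_natCast_atTop_atTop.eventually_ge_atTop (1 / η)] with n htail hvol h1 hn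
  have h1' : (1 : ℝ) ≤ n := by exact_mod_cast h1
  rw [div_le_iff₀ hη0] at hn
  have htwo : 2 ≤ Real.exp (n ^ 2 * η) := by
    have := Real.add_one_le_exp (n ^ 2 * η)
    nlinarith
  calc energyBound c C m I (n ^ 3) n ≤ Real.exp (n ^ 2 * (a + η)) + Real.exp (n ^ 2 * (a + η)) :=
        add_le_add htail hvol
    _ = 2 * Real.exp (n ^ 2 * (a + η)) := (two_mul _).symm
    _ ≤ Real.exp (n ^ 2 * η) * Real.exp (n ^ 2 * (a + η)) := by gcongr
    _ = Real.exp (n ^ 2 * x) := by rw [← Real.exp_add, ← mul_add, ← hxη]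

lemma limsup_log_div_sq_le {u : ℕ → ℝ≥0∞} {x : ℝ}
    (h : ∀ᶠ n : ℕ in atTop, u n ≤ ENNReal.ofReal (Real.exp (n ^ 2 * x))) :
    limsup (fun n : ℕ => (((n : ℝ) ^ 2)⁻¹ : ℝ) * ENNReal.log (u n)) atTop ≤ (x : EReal) := by
  refine limsup_le_of_le (by isBoundedDefault) ?_
  filter_upwards [h, eventually_gt_atTop 0] with n hn h0
  calc (((n : ℝ) ^ 2)⁻¹ : ℝ) * ENNReal.log (u n)
      ≤ (((n : ℝ) ^ 2)⁻¹ : ℝ) * ((n ^ 2 * x : ℝ) : EReal) := by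
        refine mul_le_mul_of_nonneg_left ((ENNReal.log_monotone hn).trans_eq ?_) ?_
        · rw [ENNReal.log_ofReal_of_pos (Real.exp_pos _), Real.log_exp]
        · exact_mod_cast inv_nonneg.2 (sq_nonneg (n : ℝ))
    _ = x := by rw [← EReal.coe_mul, inv_mul_cancel_left₀ (by positivity)]

end Asymptotics

noncomputable section LocalBound

lemma exists_forall_levyProkhorovDist_le_integral_prod_le {X : Type*} [PseudoMetricSpace X]
    [SecondCountableTopology X] [MeasurableSpace X] [BorelSpace X]
    (φ : BoundedContinuousFunction (X × X) ℝ) (μ : ProbabilityMeasure X) {I : ℝ}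
    (hI : ∫ q, φ q ∂(μ : Measure X).prod (μ : Measure X) < I) :
    ∃ ε > 0, ∀ L : ProbabilityMeasure X, levyProkhorovDist (L : Measure X) (μ : Measure X) ≤ ε →
      ∫ q, φ q ∂(L : Measure X).prod (L : Measure X) ≤ I := by
  have hcont : Continuous fun L : LevyProkhorov (ProbabilityMeasure X) =>
      ∫ q, φ q ∂((L.toMeasure.prod L.toMeasure : ProbabilityMeasure (X × X)) : Measure (X × X)) :=
    (ProbabilityMeasure.continuous_integral_boundedContinuousFunction φ).comp
      ((ProbabilityMeasure.continuous_prod.comp (continuous_id.prodMk continuous_id)).comp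
        LevyProkhorov.continuous_toMeasure_probabilityMeasure)
  simp only [ProbabilityMeasure.toMeasure_prod] at hcont
  obtain ⟨ε, hε, hball⟩ := Metric.isOpen_iff.1 (isOpen_Iio.preimage hcont)
    (LevyProkhorov.ofMeasure μ) hI
  refine ⟨ε / 2, half_pos hε, fun L hL => ?_⟩
  have hmem : LevyProkhorov.ofMeasure L ∈ Metric.ball (LevyProkhorov.ofMeasure μ) ε := by
    rw [Metric.mem_ball, LevyProkhorov.dist_probabilityMeasure_def]
    exact hL.trans_lt (half_lt_self hε)
  exact le_of_lt (hball hmem)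

variable {Ω : Type*} [MeasurableSpace Ω] {P : Measure Ω} {ξ : ℕ → Ω → ℝ}

lemma iInf_limsup_log_le_integral_regKernel (hmeas : ∀ j, AEMeasurable (ξ j) P)
    (hindep : iIndepFun ξ P) (hpos : ∀ j, ∀ᵐ ω ∂P, 0 < ξ j ω) {C : ℝ≥0}
    (hdens : ∀ j, P.map (ξ j) ≤ C • volume) {c : ℝ} (hc : 0 < c)
    (htail : ∀ j t, 0 ≤ t → P {ω | t < ξ j ω} ≤ ENNReal.ofReal (Real.exp (-(c * t))))
    {L : ℕ → Ω → ProbabilityMeasure ℂ}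
    (hL : ∀ n, 1 ≤ n → ∀ ω, (∀ j, 0 < ξ j ω) → (L n ω : Measure ℂ) = zeroMeasure (randPoly ξ n ω))
    (μ : ProbabilityMeasure ℂ) (m : ℝ) {δ : ℝ} (hδ : 0 < δ) :
    (⨅ (ε : ℝ) (_ : 0 < ε), limsup (fun n : ℕ => (((n : ℝ) ^ 2)⁻¹ : ℝ) *
        ENNReal.log (P {ω | levyProkhorovDist (L n ω : Measure ℂ) (μ : Measure ℂ) ≤ ε})) atTop) ≤
      (((∫ q, regKernel m δ q ∂(μ : Measure ℂ).prod (μ : Measure ℂ)) / 2 +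
        2 * Real.exp (-m) : ℝ) : EReal) := by
  refine EReal.le_of_forall_lt_iff_le.1 fun x hx => ?_
  rw [EReal.coe_lt_coe_iff] at hx
  obtain ⟨I, hJI, hIx⟩ : ∃ I, ∫ q, regKernel m δ q ∂(μ : Measure ℂ).prod (μ : Measure ℂ) < I ∧
      I < 2 * (x - 2 * Real.exp (-m)) := exists_between (by linarith)
  have hIx' : I / 2 + 2 * Real.exp (-m) < x := by linarith
  obtain ⟨ε, hε, hle⟩ := exists_forall_levyProkhorovDist_le_integral_prod_le
    (.ofNormedAddCommGroup (regKernel m δ) (continuous_regKernel m hδ) |m| (abs_regKernel_le m δ))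
    μ hJI
  refine (iInf₂_le ε hε).trans (limsup_log_div_sq_le ?_)
  filter_upwards [eventually_energyBound_le hc C.coe_nonneg hIx', eventually_ge_atTop 1]
    with n hn h1
  calc P {ω | levyProkhorovDist (L n ω : Measure ℂ) (μ : Measure ℂ) ≤ ε}
      ≤ P {ω | ∫ q, regKernel m δ q ∂(L n ω : Measure ℂ).prod (L n ω : Measure ℂ) ≤ I} :=
        measure_mono fun ω => hle (L n ω)
    _ ≤ ENNReal.ofReal (energyBound c C m I (n ^ 3) n) :=
        measure_integral_regKernel_le hmeas hindep hpos hdens htail h1 (hL n h1) m hδ I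
          (by positivity)
    _ ≤ ENNReal.ofReal (Real.exp (n ^ 2 * x)) := ENNReal.ofReal_le_ofReal hn

end LocalBound

noncomputable section Limits

lemma tendsto_lintegral_min_natCast {α : Type*} [MeasurableSpace α] {ν : Measure α}
    {f : α → ℝ≥0∞} (hf : AEMeasurable f ν) :
    Tendsto (fun k : ℕ => ∫⁻ x, min (f x) k ∂ν) atTop (nhds (∫⁻ x, f x ∂ν)) := by
  refine lintegral_tendsto_of_tendsto_of_monotone (fun k => hf.min aemeasurable_const)
    (ae_of_all _ fun x k l hkl => min_le_min le_rfl (by exact_mod_cast hkl))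
    (ae_of_all _ fun x => ?_)
  simpa only [min_top_right] using (tendsto_const_nhds (x := f x)).min ENNReal.tendsto_nat_nhds_top

lemma coe_integral_max_neg_min {α : Type*} [MeasurableSpace α] {ν : Measure α}
    [IsFiniteMeasure ν] {g : α → ℝ} (hg : AEMeasurable g ν) (k : ℕ) :
    ((∫ x, max (-(k : ℝ)) (min k (g x)) ∂ν : ℝ) : EReal) =
      ((∫⁻ x, min (ENNReal.ofReal (g x)) k ∂ν : ℝ≥0∞) : EReal) -
        ((∫⁻ x, min (ENNReal.ofReal (-g x)) k ∂ν : ℝ≥0∞) : EReal) := by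
  have hfin (f : α → ℝ≥0∞) : ∫⁻ x, min (f x) k ∂ν ≠ ⊤ :=
    ((lintegral_mono fun x => min_le_right _ _).trans_lt
      (by simpa using ENNReal.mul_lt_top (ENNReal.natCast_lt_top k) (measure_lt_top ν _))).ne
  have hint : Integrable (fun x => max (-(k : ℝ)) (min k (g x))) ν :=
    .of_bound (aemeasurable_const.max (aemeasurable_const.min hg)).aestronglyMeasurable |(k : ℝ)|
      (ae_of_all _ fun x => abs_max_neg_min_le k (g x))
  have hpos (y : ℝ) : ENNReal.ofReal (max (-(k : ℝ)) (min k y)) = min (ENNReal.ofReal y) k := by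
    rw [ENNReal.ofReal_max, ENNReal.ofReal_min, ENNReal.ofReal_natCast, min_comm,
      ENNReal.ofReal_of_nonpos (neg_nonpos.2 k.cast_nonneg), max_eq_right zero_le]
  have hneg (y : ℝ) : -max (-(k : ℝ)) (min k y) = max (-(k : ℝ)) (min k (-y)) := by
    rw [← min_neg_neg, neg_neg, ← max_neg_neg, max_min_distrib_left,
      max_eq_right (by simp : -(k : ℝ) ≤ k)]
  rw [integral_eq_lintegral_pos_part_sub_lintegral_neg_part hint, EReal.coe_sub]
  simp only [hneg, hpos, EReal.coe_ennreal_toReal (hfin _)]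

lemma tendsto_coe_integral_max_neg_min {α : Type*} [MeasurableSpace α] {ν : Measure α}
    [IsFiniteMeasure ν] {g : α → ℝ} (hg : AEMeasurable g ν)
    (h : ∫⁻ x, ENNReal.ofReal (g x) ∂ν ≠ ⊤ ∨ ∫⁻ x, ENNReal.ofReal (-g x) ∂ν ≠ ⊤) :
    Tendsto (fun k : ℕ => ((∫ x, max (-(k : ℝ)) (min k (g x)) ∂ν : ℝ) : EReal)) atTop
      (nhds (((∫⁻ x, ENNReal.ofReal (g x) ∂ν : ℝ≥0∞) : EReal) -
        ((∫⁻ x, ENNReal.ofReal (-g x) ∂ν : ℝ≥0∞) : EReal))) := by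
  have hcoe := continuous_coe_ennreal_ereal
  simp only [coe_integral_max_neg_min hg, sub_eq_add_neg]
  refine Tendsto.comp (EReal.continuousAt_add (p := (_, _)) ?_ ?_)
    (((hcoe.tendsto _).comp (tendsto_lintegral_min_natCast hg.ennreal_ofReal)).prodMk_nhds
    ((continuous_neg.tendsto _).comp
      ((hcoe.tendsto _).comp (tendsto_lintegral_min_natCast hg.neg.ennreal_ofReal))))
  · simpa using h
  · exact .inl (EReal.coe_ennreal_ne_bot _)

lemma measurable_fker : Measurable fun q : ℂ × ℂ => fker q.1 q.2 := by
  unfold fker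
  fun_prop (disch := exact Real.measurable_log)

/-- The kernel `-f` truncated at `±m`, the limit of `regKernel m δ` as `δ → 0` off the diagonal. -/
def truncKernel (m : ℝ) (q : ℂ × ℂ) : ℝ :=
  max (-m) (min m (-fker q.1 q.2))

lemma tendsto_regKernel (m : ℝ) {z w : ℂ} (hz : z ≠ 1) (hw : w ≠ 1) (hzw : z ≠ w) :
    Tendsto (fun δ => regKernel m δ (z, w)) (nhds 0) (nhds (truncKernel m (z, w))) := by
  have hz' : ‖1 - z‖ ≠ 0 := norm_ne_zero_iff.2 (sub_ne_zero.2 hz.symm)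
  have hw' : ‖1 - w‖ ≠ 0 := norm_ne_zero_iff.2 (sub_ne_zero.2 hw.symm)
  have hzw' : ‖z - w‖ ≠ 0 := norm_ne_zero_iff.2 (sub_ne_zero.2 hzw)
  have hzero : regKernel m 0 (z, w) = truncKernel m (z, w) := by
    simp only [regKernel, truncKernel, fker, add_zero, zero_mul, neg_sub,
      Real.log_div hzw' (mul_ne_zero hz' hw'), Real.log_mul hz' hw']
  rw [← hzero]
  refine ContinuousAt.tendsto (continuousAt_const.max (continuousAt_const.min
    (ContinuousAt.log (ContinuousAt.div (by fun_prop) (by fun_prop) ?_) ?_)))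
  all_goals simp [hz', hw', hzw']

lemma eventually_regKernel_self_eq (m : ℝ) {z : ℂ} (hz : z ≠ 1) :
    ∀ᶠ δ in nhdsWithin 0 (Set.Ioi 0), regKernel m δ (z, z) = -m := by
  have hz' : 0 < ‖1 - z‖ := norm_pos_iff.2 (sub_ne_zero.2 hz.symm)
  have hr : 0 < Real.exp (-m) * (‖1 - z‖ * ‖1 - z‖) := by positivity
  filter_upwards [Ioo_mem_nhdsGT hr] with δ ⟨hδ, hδr⟩
  have hlog : Real.log ((‖z - z‖ + δ) / (‖1 - z‖ * ‖1 - z‖ + δ * Real.exp (-m))) ≤ -m := by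
    rw [sub_self, norm_zero, zero_add, Real.log_le_iff_le_exp (by positivity),
      div_le_iff₀ (by positivity), mul_add]
    have : 0 ≤ Real.exp (-m) * (δ * Real.exp (-m)) := by positivity
    linarith
  exact max_eq_left ((min_le_right _ _).trans hlog)

-- The maximum is needed on the diagonal only, where `fker` takes a junk value (`Real.log 0 = 0`).
lemma tendsto_max_regKernel_truncKernel (m : ℝ) {z w : ℂ} (hz : z ≠ 1) (hw : w ≠ 1) :
    Tendsto (fun δ => max (regKernel m δ (z, w)) (truncKernel m (z, w)))
      (nhdsWithin 0 (Set.Ioi 0)) (nhds (truncKernel m (z, w))) := by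
  rcases eq_or_ne z w with rfl | hzw
  · refine tendsto_const_nhds.congr' ?_
    filter_upwards [eventually_regKernel_self_eq m hz] with δ hδ
    rw [hδ, max_eq_right]
    exact le_max_left _ _
  · simpa only [max_self] using ((tendsto_regKernel m hz hw hzw).mono_left nhdsWithin_le_nhds).max
      (tendsto_const_nhds (x := truncKernel m (z, w)))

lemma exists_integral_regKernel_lt {μ : Measure ℂ} [IsFiniteMeasure μ] (hμ : μ {1} = 0) (m : ℝ)
    {x : ℝ} (hx : ∫ q, truncKernel m q ∂μ.prod μ < x) :
    ∃ δ > 0, ∫ q, regKernel m δ q ∂μ.prod μ < x := by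
  have hne : ∀ᵐ z ∂μ, z ≠ 1 := by simpa [ae_iff] using hμ
  have hmeas : AEStronglyMeasurable (truncKernel m) (μ.prod μ) :=
    (measurable_const.max (measurable_const.min measurable_fker.neg)).aestronglyMeasurable
  have hint : Integrable (truncKernel m) (μ.prod μ) :=
    .of_bound hmeas |m| (ae_of_all _ fun q => abs_max_neg_min_le m _)
  have hlim : Tendsto (fun δ => ∫ q, max (regKernel m δ q) (truncKernel m q) ∂μ.prod μ)
      (nhdsWithin 0 (Set.Ioi 0)) (nhds (∫ q, truncKernel m q ∂μ.prod μ)) := by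
    refine tendsto_integral_filter_of_dominated_convergence (fun _ => |m|) ?_ ?_
      (integrable_const _) ?_
    · filter_upwards [self_mem_nhdsWithin] with δ hδ
      exact (continuous_regKernel m hδ).aestronglyMeasurable.sup hmeas
    · refine Eventually.of_forall fun δ => ae_of_all _ fun q => ?_
      exact abs_max_le_max_abs_abs.trans
        (max_le (abs_regKernel_le m δ q) (abs_max_neg_min_le m _))
    · filter_upwards [Measure.quasiMeasurePreserving_fst.ae hne,
        Measure.quasiMeasurePreserving_snd.ae hne] with q h1 h2
      exact tendsto_max_regKernel_truncKernel m h1 h2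
  obtain ⟨δ, hlt, hδ⟩ := ((hlim.eventually_lt_const hx).and self_mem_nhdsWithin).exists
  have hreg : Integrable (regKernel m δ) (μ.prod μ) := integrable_regKernel m hδ _
  exact ⟨δ, hδ, (integral_mono hreg (hreg.sup hint) fun q => le_max_left _ _).trans_lt hlt⟩

lemma le_neg_half_mul_doubleInt {μ : Measure ℂ} [IsFiniteMeasure μ] {y : EReal}
    (h : ∀ k : ℕ, y ≤ ((∫ q, truncKernel k q ∂μ.prod μ) / 2 + 2 * Real.exp (-k) : ℝ)) :
    y ≤ -((2 : EReal)⁻¹ * doubleInt μ) := by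
  have htwo : (2 : EReal)⁻¹ = ((2⁻¹ : ℝ) : EReal) := (EReal.coe_inv 2).symm
  by_cases hA : ∫⁻ q : ℂ × ℂ, ENNReal.ofReal (-fker q.1 q.2) ∂μ.prod μ = ⊤
  · rw [doubleInt, hA, EReal.coe_ennreal_top, EReal.sub_top, htwo,
      EReal.coe_mul_bot_of_pos (by norm_num), EReal.neg_bot]
    exact le_top
  have hexp : Tendsto (fun k : ℕ => ((2 * Real.exp (-k) : ℝ) : EReal)) atTop (nhds (0 : ℝ)) := by
    refine (continuous_coe_real_ereal.tendsto _).comp ?_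
    simpa using (Real.tendsto_exp_neg_atTop_nhds_zero.comp tendsto_natCast_atTop_atTop).const_mul 2
  have htrunc := tendsto_coe_integral_max_neg_min (ν := μ.prod μ) (g := fun q => -fker q.1 q.2)
    measurable_fker.neg.aemeasurable (.inl hA)
  simp only [neg_neg] at htrunc
  have hlim := (EReal.continuousAt_add (p := (_, _)) (.inr (EReal.coe_ne_bot 0))
    (.inr (EReal.coe_ne_top 0))).tendsto.comp
      ((EReal.Tendsto.const_mul (a := ((2⁻¹ : ℝ) : EReal)) htrunc (.inl (EReal.coe_ne_bot _))
        (.inl (EReal.coe_ne_top _))).prodMk_nhds hexp)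
  have hle := ge_of_tendsto' hlim fun k => (h k).trans_eq <| by
    rw [div_eq_inv_mul, EReal.coe_add, EReal.coe_mul]
    rfl
  rwa [doubleInt, ← mul_neg, EReal.neg_sub (.inl (EReal.coe_ennreal_ne_bot _))
    (.inr (by simpa using hA)), add_comm, ← sub_eq_add_neg, htwo, ← add_zero (_ * _)]

end Limits

noncomputable section MassAtOne

/-- The logarithmic singularity `log⁺ (1 / |1 - z|)` with `|1 - z|` cut off below at `e⁻ᵏ`: a
bounded continuous test function detecting mass at `1`. -/
def cutLogKernel (k : ℝ) (z : ℂ) : ℝ :=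
  Real.posLog (max ‖1 - z‖ (Real.exp (-k)))⁻¹

lemma continuous_cutLogKernel (k : ℝ) : Continuous (cutLogKernel k) :=
  Real.continuous_posLog.comp <| (by fun_prop : Continuous _).inv₀ fun z =>
    ((Real.exp_pos (-k)).trans_le (le_max_right ‖1 - z‖ _)).ne'

lemma cutLogKernel_le_of_le {k r : ℝ} {z : ℂ} (hr : 0 < r) (h : r ≤ max ‖1 - z‖ (Real.exp (-k))) :
    cutLogKernel k z ≤ Real.posLog r⁻¹ :=
  Real.posLog_le_posLog (by positivity) (inv_anti₀ hr h)

lemma cutLogKernel_one {k : ℝ} (hk : 0 ≤ k) : cutLogKernel k 1 = k := by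
  rw [cutLogKernel, sub_self, norm_zero, max_eq_right (Real.exp_pos _).le, Real.exp_neg, inv_inv,
    Real.posLog_apply, Real.log_exp, max_eq_right hk]

lemma abs_cutLogKernel_le {k : ℝ} (hk : 0 ≤ k) (z : ℂ) : |cutLogKernel k z| ≤ k := by
  calc |cutLogKernel k z| = cutLogKernel k z := abs_of_nonneg Real.posLog_nonneg
    _ ≤ Real.posLog (Real.exp (-k))⁻¹ :=
        cutLogKernel_le_of_le (Real.exp_pos _) (le_max_right _ _)
    _ = k := by rw [Real.exp_neg, inv_inv, Real.posLog_apply, Real.log_exp, max_eq_right hk]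

lemma polPos.integral_cutLogKernel_le {p : ℂ[X]} (hp : polPos p) (k : ℝ) :
    ∫ z, cutLogKernel k z ∂zeroMeasure p ≤ 1 := by
  obtain ⟨z, hz⟩ := exists_map_univ_eq_roots (p := p) rfl
  have hle (j) : cutLogKernel k (z j) ≤ Real.log (max 1 (1 * ‖(z j - 1)⁻¹‖)) := by
    have hz1 : z j ≠ 1 :=
      hp.ne_one_of_mem_roots (hz ▸ Multiset.mem_map_of_mem z (Finset.mem_univ_val j))
    rw [one_mul, ← Real.posLog_eq_log_max_one (norm_nonneg _), norm_inv, norm_sub_rev]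
    exact cutLogKernel_le_of_le (norm_pos_iff.2 (sub_ne_zero.2 hz1.symm)) (le_max_left _ _)
  rw [integral_zeroMeasure hz, inv_mul_le_iff₀ (by exact_mod_cast hp.1), mul_one]
  calc ∑ j, cutLogKernel k (z j) ≤ ∑ j, Real.log (max 1 (1 * ‖(z j - 1)⁻¹‖)) :=
        Finset.sum_le_sum fun j _ => hle j
    _ = Real.log (∏ j, max 1 (1 * ‖(z j - 1)⁻¹‖)) :=
        (Real.log_prod fun j _ => by positivity).symm
    _ ≤ Real.log ((1 + 1) ^ p.natDegree) :=
        Real.log_le_log (by positivity) (hp.prod_max_one_le hz zero_le_one)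
    _ = p.natDegree * Real.log 2 := by rw [Real.log_pow, one_add_one_eq_two]
    _ ≤ p.natDegree := mul_le_of_le_one_right (Nat.cast_nonneg _) (by linarith [Real.log_two_lt_d9])

lemma measure_singleton_one_of_mem_calP {μ : ProbabilityMeasure ℂ} (hμ : μ ∈ calP) :
    (μ : Measure ℂ) {1} = 0 := by
  have hle {k : ℝ} (hk : 0 ≤ k) : k * (μ : Measure ℂ).real {1} ≤ 1 := by
    let φ : BoundedContinuousFunction ℂ ℝ := .ofNormedAddCommGroup (cutLogKernel k)
      (continuous_cutLogKernel k) k (abs_cutLogKernel_le hk)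
    have hclosed : IsClosed {ν : ProbabilityMeasure ℂ | ∫ z, φ z ∂(ν : Measure ℂ) ≤ 1} :=
      isClosed_le (ProbabilityMeasure.continuous_integral_boundedContinuousFunction φ)
        continuous_const
    calc k * (μ : Measure ℂ).real {1} ≤ k * (μ : Measure ℂ).real {z | k ≤ φ z} :=
          mul_le_mul_of_nonneg_left
            (measureReal_mono (Set.singleton_subset_iff.2 (cutLogKernel_one hk).ge)) hk
      _ ≤ ∫ z, φ z ∂(μ : Measure ℂ) := mul_meas_ge_le_integral_of_nonneg
          (ae_of_all _ fun z => Real.posLog_nonneg) (φ.integrable _) k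
      _ ≤ 1 := by
          refine closure_minimal ?_ hclosed hμ
          rintro ν ⟨p, hp, hν⟩
          change ∫ z, cutLogKernel k z ∂(ν : Measure ℂ) ≤ 1
          rw [hν]
          exact hp.integral_cutLogKernel_le k
  rw [← measureReal_eq_zero_iff]
  by_contra hne
  have hpos : 0 < (μ : Measure ℂ).real {1} := measureReal_nonneg.lt_of_ne' hne
  have := hle (div_nonneg zero_le_two hpos.le)
  rw [div_mul_cancel₀ _ hne] at this
  linarith

end MassAtOne

noncomputable section ExponentialLaw

lemma expMeasure_le_smul_volume (r : ℝ≥0) : expMeasure r ≤ r • volume := by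
  calc expMeasure r = volume.withDensity (exponentialPDF r) := rfl
    _ ≤ volume.withDensity fun _ => r := withDensity_mono <| ae_of_all _ fun x => by
        rw [exponentialPDF_eq, ← ENNReal.ofReal_coe_nnreal]
        refine ENNReal.ofReal_le_ofReal ?_
        split_ifs with hx
        · exact mul_le_of_le_one_right r.2 <|
            Real.exp_le_one_iff.2 <| neg_nonpos.2 <| mul_nonneg r.2 hx
        · exact r.2
    _ = r • volume := withDensity_const _

lemma expMeasure_Ioi {r t : ℝ} (hr : 0 < r) (ht : 0 ≤ t) :
    expMeasure r (Set.Ioi t) = ENNReal.ofReal (Real.exp (-(r * t))) := by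
  have := isProbabilityMeasure_expMeasure hr
  rw [← Set.compl_Iic, ← ofReal_measureReal, probReal_compl_eq_one_sub measurableSet_Iic,
    ← cdf_eq_real, cdf_expMeasure_eq hr, if_pos ht, sub_sub_cancel]

lemma ae_expMeasure_pos {r : ℝ} (hr : 0 < r) : ∀ᵐ x ∂expMeasure r, 0 < x := by
  have := isProbabilityMeasure_expMeasure hr
  exact mem_ae_iff_prob_eq_one measurableSet_Ioi |>.2 <| by simpa using expMeasure_Ioi hr le_rfl

end ExponentialLaw

theorem local_upper_bound_general {Ω : Type*} [MeasurableSpace Ω] {P : Measure Ω} {ξ : ℕ → Ω → ℝ}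
    (hmeas : ∀ j, AEMeasurable (ξ j) P) (hindep : iIndepFun ξ P)
    (hpos : ∀ j, ∀ᵐ ω ∂P, 0 < ξ j ω) {C : ℝ≥0} (hdens : ∀ j, P.map (ξ j) ≤ C • volume)
    {c : ℝ} (hc : 0 < c)
    (htail : ∀ j t, 0 ≤ t → P {ω | t < ξ j ω} ≤ ENNReal.ofReal (Real.exp (-(c * t))))
    {L : ℕ → Ω → ProbabilityMeasure ℂ}
    (hL : ∀ n, 1 ≤ n → ∀ ω, (∀ j, 0 < ξ j ω) →
      (L n ω : Measure ℂ) = zeroMeasure (randPoly ξ n ω))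
    {μ : ProbabilityMeasure ℂ} (hμ : (μ : Measure ℂ) {1} = 0) :
    (⨅ (ε : ℝ) (_ : 0 < ε),
        atTop.limsup (fun n : ℕ =>
          ((((n : ℝ) ^ 2)⁻¹ : ℝ) : EReal) *
            ENNReal.log (P {ω |
              levyProkhorovDist (L n ω : Measure ℂ) (μ : Measure ℂ) ≤ ε}))) ≤
      -((2 : EReal)⁻¹ * doubleInt (μ : Measure ℂ)) := by
  refine le_neg_half_mul_doubleInt fun k => EReal.le_of_forall_lt_iff_le.1 fun x hx => ?_
  obtain ⟨δ, hδ, hlt⟩ := exists_integral_regKernel_lt hμ k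
    (x := 2 * (x - 2 * Real.exp (-k))) (by linarith [EReal.coe_lt_coe_iff.1 hx])
  refine (iInf_limsup_log_le_integral_regKernel hmeas hindep hpos hdens hc htail hL μ k hδ).trans ?_
  exact EReal.coe_le_coe_iff.2 (by linarith)

/-- Local upper bound: for every `μ ∈ 𝒫`,
`lim_{ε→0} limsup_n (1/n²) log P(d(L_n, μ) ≤ ε) ≤ -(1/2)∬ f dμ dμ`,
where `d` is the Lévy–Prokhorov metric; since the inner `limsup` is monotone in
`ε`, the limit as `ε → 0⁺` is the infimum over `ε > 0`. -/
theorem local_upper_bound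
    {Ω : Type*} [MeasurableSpace Ω] (P : Measure Ω) [IsProbabilityMeasure P]
    (ξ : ℕ → Ω → ℝ) (hmeas : ∀ j, Measurable (ξ j))
    (hindep : iIndepFun ξ P)
    (hdist : ∀ j, Measure.map (ξ j) P = ProbabilityTheory.expMeasure 1)
    (Ln : ℕ → Ω → ProbabilityMeasure ℂ)
    (hLn : ∀ n, 1 ≤ n → ∀ ω, (∀ j, 0 < ξ j ω) →
      (Ln n ω : Measure ℂ) = zeroMeasure (randPoly ξ n ω)) :
    ∀ μ ∈ calP,
      (⨅ (ε : ℝ) (_ : 0 < ε),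
          atTop.limsup (fun n : ℕ =>
            ((((n : ℝ) ^ 2)⁻¹ : ℝ) : EReal) *
              ENNReal.log (P {ω |
                levyProkhorovDist (Ln n ω : Measure ℂ) (μ : Measure ℂ) ≤ ε}))) ≤
        -((2 : EReal)⁻¹ * doubleInt (μ : Measure ℂ)) := by
  intro μ hμ
  have hpos (j) : ∀ᵐ ω ∂P, 0 < ξ j ω :=
    ae_of_ae_map (hmeas j).aemeasurable (hdist j ▸ ae_expMeasure_pos one_pos)
  have hdens (j) : P.map (ξ j) ≤ (1 : ℝ≥0) • volume := hdist j ▸ expMeasure_le_smul_volume 1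
  have htail (j) (t : ℝ) (ht : 0 ≤ t) :
      P {ω | t < ξ j ω} ≤ ENNReal.ofReal (Real.exp (-(1 * t))) := by
    rw [← expMeasure_Ioi one_pos ht, ← hdist j, Measure.map_apply (hmeas j) measurableSet_Ioi]
    rfl
  exact local_upper_bound_general (fun j => (hmeas j).aemeasurable) hindep hpos hdens one_pos htail
    hLn (measure_singleton_one_of_mem_calP hμ)
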